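/- Let k be an algebraically closed field of characteristic different from 2, and let R be a smooth affine k-algebra of Krull dimension 3 (the coordinate ring of a smooth affine threefold over k). If P and Q are finitely generated projective R-modules of constant rank 3 that are stably isomorphic, i.e. P ⊕ Rⁿ ≅ Q ⊕ Rⁿ as R-modules for some natural number n, then P ≅ Q. (Uniqueness part of the Mohan Kumar–Murthy classification of rank 3 bundles on smooth affine threefolds, which the paper asserts it reproves by obstruction theory for fields of characteristic ≠ 2 in the Remark following its main classification theorem.) -/

import Mathlib

universe u

/-- A finitely generated projective module has constant rank `r` if its localization at
every prime ideal is free of rank `r`. -/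
def HasConstantRank (R : Type*) [CommRing R] (M : Type*) [AddCommGroup M] [Module R M]
    (r : ℕ) : Prop :=
  ∀ (𝔭 : Ideal R) [𝔭.IsPrime],
    Nonempty (LocalizedModule 𝔭.primeCompl M ≃ₗ[Localization.AtPrime 𝔭]
      (Fin r → Localization.AtPrime 𝔭))

/-!
It suffices to show that, for `P` of rank at least `3`, the automorphism group of `P ⊕ A` acts
transitively on unimodular elements. If the rank exceeds the dimension, adding a generic multiple
of the last coordinate makes the component in `P` unimodular, by a dimension count over the
algebraically closed field `k`.

In rank `3`, choose maps `α : A³ → P` and `β : P → A³` whose composites are multiplication by a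
nonzerodivisor `s`. The dimension count applied along `s = 0` moves a unimodular element to one of
the form `(s² q, a)` with `a ≡ 1` modulo `s²`. By Bertini, after adding a generic multiple of `a` to
`b = β q`, the zero locus of the resulting `c` is a finite set of reduced points away from `s = 0`.
On it `a` is a sixth power, because `k` is algebraically closed. By the Chinese remainder theorem
there is then `z ≡ 1` modulo `s²` with `z⁶ ≡ a` modulo `s² c`, so `(s² q, a) = (α (s b), a)` is
equivalent to `(α (s c), z⁶)`. Finally, by Suslin, `(z⁶, s c)` is the first column of an invertible
matrix, which can be chosen congruent to `1` modulo `s`; such a matrix is transported along `α` to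
an automorphism of `P ⊕ A` taking `(0, 1)` to `(α (s c), z⁶)`.
-/

/-! ### Transcendence degrees of residue fields -/

section TranscendenceDegree

lemma ringKrullDim_le_of_isIntegral_of_injective {C D : Type*} [CommRing C] [CommRing D]
    [Algebra C D] [Algebra.IsIntegral C D] (hinj : Function.Injective (algebraMap C D)) :
    ringKrullDim C ≤ ringKrullDim D := by
  refine iSup_le fun l ↦ ?_
  have hker : (⊥ : Ideal D).comap (algebraMap C D) ≤ (RelSeries.head l).asIdeal := by
    rw [← RingHom.ker_eq_comap_bot, (RingHom.injective_iff_ker_eq_bot _).1 hinj]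
    exact bot_le
  obtain ⟨Q, -, _, hQ⟩ := Ideal.exists_ideal_over_prime_of_isIntegral _ _ hker
  have : Q.LiesOver (RelSeries.head l).asIdeal := ⟨hQ.symm⟩
  obtain ⟨L, hL, -⟩ := Ideal.exists_ltSeries_of_hasGoingUp l Q
  exact Order.le_krullDim_iff.2 ⟨L, hL⟩

lemma trdeg_fractionRing_le_of_ringKrullDim_le {k D : Type u} (K : Type u) [Field k] [CommRing D]
    [IsDomain D] [Algebra k D] [Algebra.FiniteType k D] [Field K] [Algebra k K] [Algebra D K]
    [IsScalarTower k D K] [IsFractionRing D K] {n : ℕ} (h : ringKrullDim D ≤ n) :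
    Algebra.trdeg k K ≤ (n : Cardinal) := by
  obtain ⟨s, g, hginj, hgint⟩ := exists_integral_inj_algHom_of_fg k D
  algebraize [g.toRingHom]
  have : IsScalarTower k (MvPolynomial (Fin s) k) D := IsScalarTower.of_algHom g
  have : FaithfulSMul (MvPolynomial (Fin s) k) D :=
    (faithfulSMul_iff_algebraMap_injective _ _).2 hginj
  have : FaithfulSMul D K :=
    (faithfulSMul_iff_algebraMap_injective _ _).2 (IsFractionRing.injective D K)
  have : Algebra.IsIntegral (MvPolynomial (Fin s) k) D := ⟨hgint⟩
  have : Algebra.IsAlgebraic D K := IsLocalization.isAlgebraic _ (nonZeroDivisors D)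
  have hs : s ≤ n := by
    have hdim : ringKrullDim (MvPolynomial (Fin s) k) = s := by
      rw [MvPolynomial.ringKrullDim_of_isNoetherianRing, ringKrullDim_eq_zero_of_field, zero_add,
        Nat.card_fin]
    exact_mod_cast hdim ▸ (ringKrullDim_le_of_isIntegral_of_injective hginj).trans h
  have htrdeg : Algebra.trdeg k K = s := by
    rw [← trdeg_add_eq k D, ← trdeg_add_eq k (MvPolynomial (Fin s) k) (A := D),
      trdeg_eq_zero (R := D), trdeg_eq_zero (R := MvPolynomial (Fin s) k),
      MvPolynomial.trdeg_of_isDomain]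
    simp
  exact htrdeg ▸ Nat.cast_le.2 hs

variable {k A : Type u} [Field k] [CommRing A] [Algebra k A] [Algebra.FiniteType k A] {d : ℕ}

lemma trdeg_residueField_le_of_ringKrullDim_le (hd : ringKrullDim A ≤ d) (p : Ideal A)
    [p.IsPrime] : Algebra.trdeg k p.ResidueField ≤ (d : Cardinal) :=
  trdeg_fractionRing_le_of_ringKrullDim_le (D := A ⧸ p) _ ((ringKrullDim_quotient_le p).trans hd)

lemma trdeg_residueField_lt_of_mem_nonZeroDivisors (hd : ringKrullDim A ≤ d) {s : A}
    (hs : s ∈ nonZeroDivisors A) {p : Ideal A} [p.IsPrime] (hsp : s ∈ p) :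
    Algebra.trdeg k p.ResidueField < (d : Cardinal) := by
  have hle : ringKrullDim (A ⧸ p) ≤ ringKrullDim (A ⧸ Ideal.span {s}) :=
    ringKrullDim_le_of_surjective
      (Ideal.Quotient.factor ((Ideal.span_singleton_le_iff_mem p).2 hsp))
      (Ideal.Quotient.factor_surjective _)
  have hlt : ringKrullDim (A ⧸ p) + 1 ≤ d :=
    (add_le_add_left hle 1).trans ((ringKrullDim_quotient_succ_le_of_nonZeroDivisor hs).trans hd)
  obtain ⟨e, he⟩ : ∃ e : ℕ, ringKrullDim (A ⧸ p) = e := by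
    have hnonneg : 0 ≤ ringKrullDim (A ⧸ p) := ringKrullDim_nonneg_of_nontrivial
    have hle : ringKrullDim (A ⧸ p) ≤ d := (ringKrullDim_quotient_le p).trans hd
    lift ringKrullDim (A ⧸ p) to ℕ∞ using fun h ↦ by simp [h] at hnonneg with e
    lift e to ℕ using ne_top_of_le_ne_top (ENat.natCast_ne_top d) (by exact_mod_cast hle)
    exact ⟨e, rfl⟩
  rw [he] at hlt
  refine (trdeg_fractionRing_le_of_ringKrullDim_le (D := A ⧸ p) _ he.le).trans_lt ?_
  exact_mod_cast Nat.lt_of_succ_le (by exact_mod_cast hlt)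

end TranscendenceDegree

/-! ### Generic members of affine families of sections -/

section GenericAvoidance

open MvPolynomial TensorProduct

lemma adjoin_image_compl_range_eq_adjoin_range {E K V τ κ : Type*} [Field E] [Field K] [Algebra E K]
    [AddCommGroup V] [Module E V] [Fintype τ] {v₀ : V} {v : τ → V} (b : Module.Basis κ E V)
    {a : κ → τ} (hb : ∀ i, v (a i) = b i) {t : τ → K}
    (ht : ∀ φ : Module.Dual E V,
      algebraMap E K (φ v₀) + ∑ j, algebraMap E K (φ (v j)) * t j = 0) :
    Algebra.adjoin E (t '' (Set.range a)ᶜ) = Algebra.adjoin E (Set.range t) := by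
  classical
  set S := Algebra.adjoin E (t '' (Set.range a)ᶜ)
  have hcompl (j : τ) (hj : j ∉ Set.range a) : t j ∈ S := Algebra.subset_adjoin ⟨j, hj, rfl⟩
  have hcoord (i i' : κ) : b.coord i (v (a i')) = if i' = i then 1 else 0 := by
    rw [hb, Module.Basis.coord_apply, Module.Basis.repr_self, Finsupp.single_apply]
  have hrange (i : κ) : t (a i) ∈ S := by
    have hsum := ht (b.coord i)
    rw [← Finset.add_sum_erase _ _ (Finset.mem_univ (a i)), hcoord, if_pos rfl, map_one,
      one_mul, add_left_comm, ← eq_neg_iff_add_eq_zero] at hsum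
    rw [hsum]
    refine neg_mem (add_mem (algebraMap_mem _ _) (sum_mem fun j hj ↦ ?_))
    by_cases hja : j ∈ Set.range a
    · obtain ⟨i', rfl⟩ := hja
      rw [hcoord, if_neg fun h ↦ Finset.ne_of_mem_erase hj (congrArg a h), map_zero, zero_mul]
      exact zero_mem _
    · exact mul_mem (algebraMap_mem _ _) (hcompl j hja)
  refine le_antisymm (Algebra.adjoin_mono (Set.image_subset_range _ _)) (Algebra.adjoin_le ?_)
  rintro _ ⟨j, rfl⟩
  by_cases hj : j ∈ Set.range a
  · obtain ⟨i, rfl⟩ := hj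
    exact hrange i
  · exact hcompl j hj

-- Dimension count: a basis of `V` extracted from `v` lets one eliminate `finrank E V` of the `t j`.
lemma trdeg_add_finrank_le_card {E K V : Type*} {τ : Type} [Field E] [Field K] [Algebra E K]
    [AddCommGroup V] [Module E V] [Fintype τ] {v₀ : V} {v : τ → V}
    (hv : Submodule.span E (Set.range v) = ⊤) {t : τ → K}
    [Algebra.IsAlgebraic (Algebra.adjoin E (Set.range t)) K]
    (ht : ∀ φ : Module.Dual E V,
      algebraMap E K (φ v₀) + ∑ j, algebraMap E K (φ (v j)) * t j = 0) :
    Algebra.trdeg E K + Module.finrank E V ≤ (Fintype.card τ : Cardinal) := by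
  classical
  obtain ⟨κ, a, ha, hspan, hli⟩ := exists_linearIndependent' E v
  have : Fintype κ := Fintype.ofInjective a ha
  let b : Module.Basis κ E V := .mk hli (by rw [hspan, hv])
  let s : Set K := t '' (Set.range a)ᶜ
  have hadjoin : Algebra.adjoin E s = Algebra.adjoin E (Set.range t) :=
    adjoin_image_compl_range_eq_adjoin_range b (fun i ↦ by simp [b]) ht
  have : Algebra.IsAlgebraic (Algebra.adjoin E s) K := by rwa [hadjoin]
  have hcard : s.ncard + Module.finrank E V ≤ Fintype.card τ := by
    rw [Module.finrank_eq_card_basis b, ← Nat.card_eq_fintype_card, ← Nat.card_eq_fintype_card,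
      ← Set.ncard_range_of_injective ha, ← Set.ncard_add_ncard_compl (Set.range a), add_comm]
    gcongr
    exact Set.ncard_image_le
  calc Algebra.trdeg E K + Module.finrank E V
    _ ≤ s.ncard + Module.finrank E V := by
      rw [Set.cast_ncard (Set.toFinite s)]
      gcongr
      exact Algebra.IsAlgebraic.trdeg_le_cardinalMk E s
    _ ≤ Fintype.card τ := by exact_mod_cast hcard

variable {k B : Type u} [Field k] [CommRing B] [Algebra k B] {M : Type*} [AddCommGroup M]
  [Module B M] {τ : Type}

/-- The ideal of the locus of pairs `(x, t)`, with `x` in the zero locus of `J`, at which the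
member `m + ∑ t j • g j` of the affine family of sections spanned by `g` vanishes. -/
noncomputable def incidenceIdeal [Fintype τ] (J : Ideal B) (m : M) (g : τ → M) :
    Ideal (MvPolynomial τ B) :=
  J.map C ⊔ Ideal.span (Set.range fun φ : Module.Dual B M ↦ C (φ m) + ∑ j, C (φ (g j)) * X j)

lemma residueField_isAlgebraic_adjoin_X (q : Ideal (MvPolynomial τ B)) [q.IsPrime] {E : Type*}
    [Field E] [Algebra B E] [Algebra E q.ResidueField] [IsScalarTower B E q.ResidueField] :
    Algebra.IsAlgebraic (Algebra.adjoin E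
      (Set.range fun j ↦ algebraMap (MvPolynomial τ B) q.ResidueField (X j))) q.ResidueField := by
  set S := Algebra.adjoin E (Set.range fun j ↦ algebraMap (MvPolynomial τ B) q.ResidueField (X j))
  have hmem (y : MvPolynomial τ B) : algebraMap _ q.ResidueField y ∈ S := by
    induction y using MvPolynomial.induction_on with
    | C b =>
      rw [← algebraMap_eq, ← IsScalarTower.algebraMap_apply, IsScalarTower.algebraMap_apply B E]
      exact algebraMap_mem S _
    | add p q hp hq => simpa only [map_add] using add_mem hp hq
    | mul_X p j hp => simpa only [map_mul] using mul_mem hp (Algebra.subset_adjoin ⟨j, rfl⟩)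
  refine ⟨fun x ↦ ?_⟩
  obtain ⟨a, b, hb, rfl⟩ := IsFractionRing.div_surjective (A := MvPolynomial τ B ⧸ q) x
  obtain ⟨a, rfl⟩ := Ideal.Quotient.mk_surjective a
  obtain ⟨b, rfl⟩ := Ideal.Quotient.mk_surjective b
  exact (isAlgebraic_algebraMap (⟨_, hmem a⟩ : S)).mul
    (isAlgebraic_algebraMap (⟨_, hmem b⟩ : S)).inv

lemma span_one_tmul_eq_top {p : Ideal B} [p.IsPrime] {g : τ → M} {h : B} (hh : h ∉ p)
    (hg : ∀ m, ∃ n : ℕ, h ^ n • m ∈ Submodule.span B (Set.range g)) :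
    Submodule.span p.ResidueField (Set.range fun j ↦ (1 : p.ResidueField) ⊗ₜ[B] g j) = ⊤ := by
  set W := Submodule.span p.ResidueField (Set.range fun j ↦ (1 : p.ResidueField) ⊗ₜ[B] g j)
  have hW : Submodule.span B (Set.range g) ≤
      (W.restrictScalars B).comap (TensorProduct.mk B p.ResidueField M 1) := by
    rw [Submodule.span_le]
    rintro _ ⟨j, rfl⟩
    exact Submodule.subset_span ⟨j, rfl⟩
  refine eq_top_iff.2 fun x _ ↦ ?_
  induction x with
  | zero => exact zero_mem _
  | add x y hx hy => exact add_mem (hx trivial) (hy trivial)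
  | tmul c m =>
    obtain ⟨n, hn⟩ := hg m
    have hne : algebraMap B p.ResidueField h ^ n ≠ 0 :=
      pow_ne_zero n (mt Ideal.algebraMap_residueField_eq_zero.1 hh)
    have hcm : c ⊗ₜ[B] m =
        (c * (algebraMap B p.ResidueField h ^ n)⁻¹) • ((1 : p.ResidueField) ⊗ₜ[B] (h ^ n • m)) := by
      rw [← smul_tmul, smul_tmul', smul_eq_mul, Algebra.smul_def, map_pow, mul_one,
        inv_mul_cancel_right₀ hne]
    exact hcm ▸ W.smul_mem _ (hW hn)

variable [Fintype τ] [Module.Finite B M] [Module.Projective B M] {J : Ideal B} {m : M} {g : τ → M}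
  {h : B}

lemma linearMap_add_sum_eq_zero_of_forall_dual {K : Type*} [Field K] [Algebra B K] {t : τ → K}
    (ht : ∀ φ : Module.Dual B M, algebraMap B K (φ m) + ∑ j, algebraMap B K (φ (g j)) * t j = 0)
    (ψ : M →ₗ[B] K) : ψ m + ∑ j, ψ (g j) * t j = 0 := by
  obtain ⟨n, f, i, -, -, hfi⟩ := Module.Finite.exists_comp_eq_id_of_projective B M
  obtain ⟨w, hw⟩ : ∃ w : Fin n → K, ∀ x, ψ x = ∑ r, algebraMap B K (i x r) * w r := by
    refine ⟨fun r ↦ ψ (f (Pi.single r 1)), fun x ↦ ?_⟩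
    conv_lhs => rw [← LinearMap.id_apply (R := B) x, ← hfi, LinearMap.comp_apply,
      pi_eq_sum_univ' (i x)]
    simp only [map_sum, map_smul]
    simp only [Algebra.smul_def]
  calc ψ m + ∑ j, ψ (g j) * t j
    _ = ∑ r, (algebraMap B K (i m r) + ∑ j, algebraMap B K (i (g j) r) * t j) * w r := by
      simp only [hw, Finset.sum_mul, add_mul, Finset.sum_add_distrib, mul_right_comm _ (w _)]
      rw [Finset.sum_comm]
    _ = 0 := Finset.sum_eq_zero fun r _ ↦ mul_eq_zero_of_left (ht (LinearMap.proj r ∘ₗ i)) _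

-- If the parameters were independent over `k`, the incidence variety would have dimension at
-- least `card τ`, whereas its fibre over `p` has codimension `finrank (κ(p) ⊗ M) > trdeg κ(p)`.
lemma not_algebraicIndependent_X_of_incidenceIdeal_le {q : Ideal (MvPolynomial τ B)} [q.IsPrime]
    (hq : incidenceIdeal J m g ≤ q) (hhq : C h ∉ q)
    (hg : ∀ m, ∃ n : ℕ, h ^ n • m ∈ Submodule.span B (Set.range g))
    (H : ∀ (p : Ideal B) [p.IsPrime], J ≤ p → h ∉ p →
      Algebra.trdeg k p.ResidueField < (Module.finrank p.ResidueField (p.ResidueField ⊗[B] M))) :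
    ¬ AlgebraicIndependent k fun j : τ ↦ algebraMap (MvPolynomial τ B) q.ResidueField (X j) := by
  intro hind
  let p : Ideal B := q.comap C
  let ι : p.ResidueField →ₐ[B] q.ResidueField :=
    Ideal.ResidueField.mapₐ p q (Algebra.ofId B (MvPolynomial τ B)) rfl
  algebraize [ι.toRingHom]
  have : IsScalarTower B p.ResidueField q.ResidueField := IsScalarTower.of_algHom ι
  have : IsScalarTower k p.ResidueField q.ResidueField := 
    IsScalarTower.of_algHom (ι.restrictScalars k)
  have := residueField_isAlgebraic_adjoin_X q (E := p.ResidueField)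
  have hrel (φ : Module.Dual B M) : algebraMap B q.ResidueField (φ m) +
      ∑ j, algebraMap B q.ResidueField (φ (g j)) * algebraMap (MvPolynomial τ B) _ (X j) = 0 := by
    have hmem : C (φ m) + ∑ j, C (φ (g j)) * X j ∈ q :=
      hq (le_sup_right (a := J.map C) (Ideal.subset_span ⟨φ, rfl⟩))
    have hzero := Ideal.algebraMap_residueField_eq_zero.2 hmem
    simpa only [map_add, map_sum, map_mul, ← algebraMap_eq,
      ← IsScalarTower.algebraMap_apply B (MvPolynomial τ B)] using hzero
  have hfib := trdeg_add_finrank_le_card (v₀ := 1 ⊗ₜ m)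
    (span_one_tmul_eq_top (p := p) hhq hg) fun φ ↦ linearMap_add_sum_eq_zero_of_forall_dual hrel
      ((Algebra.linearMap p.ResidueField q.ResidueField ∘ₗ φ).restrictScalars B ∘ₗ
        TensorProduct.mk B p.ResidueField M 1)
  have hlt := H p (Ideal.map_le_iff_le_comap.1 (le_sup_left.trans hq)) hhq
  have hcard := hind.lift_cardinalMk_le_trdeg
  rw [← trdeg_add_eq k p.ResidueField] at hcard
  simp only [Cardinal.mk_fintype, Cardinal.lift_natCast, Cardinal.lift_id'] at hcard
  lift Algebra.trdeg k p.ResidueField to ℕ using hlt.trans Cardinal.natCast_lt_aleph0 with a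
  lift Algebra.trdeg p.ResidueField q.ResidueField to ℕ using
    (le_self_add.trans hfib).trans_lt Cardinal.natCast_lt_aleph0 with b
  norm_cast at hlt hfib hcard
  lia

lemma exists_map_mul_pow_mem_incidenceIdeal
    (hg : ∀ m, ∃ n : ℕ, h ^ n • m ∈ Submodule.span B (Set.range g))
    (H : ∀ (p : Ideal B) [p.IsPrime], J ≤ p → h ∉ p →
      Algebra.trdeg k p.ResidueField < Module.finrank p.ResidueField (p.ResidueField ⊗[B] M)) :
    ∃ f : MvPolynomial τ k, f ≠ 0 ∧
      ∃ n : ℕ, map (algebraMap k B) f * C h ^ n ∈ incidenceIdeal J m g := by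
  by_contra! hdisj
  let S : Submonoid (MvPolynomial τ B) :=
    (nonZeroDivisors (MvPolynomial τ k)).map (map (algebraMap k B)) ⊔ Submonoid.powers (C h)
  have hIS : Disjoint (incidenceIdeal J m g : Set (MvPolynomial τ B)) S := by
    rw [Set.disjoint_left]
    intro y hyI hyS
    obtain ⟨_, ⟨f, hf, rfl⟩, _, ⟨n, rfl⟩, rfl⟩ := Submonoid.mem_sup.1 hyS
    exact hdisj f (nonZeroDivisors.ne_zero hf) n hyI
  obtain ⟨q, _, hIq, hqS⟩ := Ideal.exists_le_prime_disjoint _ S hIS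
  have hhq : C h ∉ q := fun hh ↦ Set.disjoint_left.1 hqS hh
    (Submonoid.mem_sup_right (Submonoid.mem_powers _))
  refine not_algebraicIndependent_X_of_incidenceIdeal_le hIq hhq hg H
    (algebraicIndependent_iff.2 fun f hf ↦ by_contra fun hf0 ↦ ?_)
  have haeval : aeval (fun j ↦ algebraMap (MvPolynomial τ B) q.ResidueField (X j)) f =
      algebraMap (MvPolynomial τ B) q.ResidueField (map (algebraMap k B) f) := by
    rw [← aeval_map_algebraMap B]
    exact (aeval_algebraMap_apply _ _ _).trans (congrArg _ (aeval_X_left_apply _))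
  rw [haeval, Ideal.algebraMap_residueField_eq_zero] at hf
  exact Set.disjoint_left.1 hqS hf
    (Submonoid.mem_sup_left ⟨f, mem_nonZeroDivisors_of_ne_zero hf0, rfl⟩)

lemma exists_forall_add_sum_notMem_ker_smul
    (hg : ∀ m, ∃ n : ℕ, h ^ n • m ∈ Submodule.span B (Set.range g))
    (H : ∀ (p : Ideal B) [p.IsPrime], J ≤ p → h ∉ p →
      Algebra.trdeg k p.ResidueField < Module.finrank p.ResidueField (p.ResidueField ⊗[B] M)) :
    ∃ f : MvPolynomial τ k, f ≠ 0 ∧ ∀ t : τ → k, eval t f ≠ 0 → ∀ x : B →ₐ[k] k,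
      J ≤ RingHom.ker x → x h ≠ 0 →
        m + ∑ j, algebraMap k B (t j) • g j ∉ RingHom.ker x • (⊤ : Submodule B M) := by
  obtain ⟨f, hf, n, hfn⟩ := exists_map_mul_pow_mem_incidenceIdeal (m := m) hg H
  refine ⟨f, hf, fun t ht x hxJ hxh hmem ↦ ?_⟩
  let ev : MvPolynomial τ B →+* k := eval₂Hom (x : B →+* k) t
  have hker : incidenceIdeal J m g ≤ RingHom.ker ev := by
    refine sup_le (Ideal.map_le_iff_le_comap.2 fun j hj ↦ ?_) (Ideal.span_le.2 ?_)
    · simpa [ev] using hxJ hj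
    · rintro _ ⟨φ, rfl⟩
      have hφ : φ (m + ∑ j, algebraMap k B (t j) • g j) ∈ RingHom.ker x := by
        have := Submodule.smul_top_le_comap_smul_top (RingHom.ker x) φ hmem
        rwa [Submodule.mem_comap, smul_eq_mul, Ideal.mul_top] at this
      simpa [ev, mul_comm] using hφ
  have hev : ev (map (algebraMap k B) f * C h ^ n) = eval t f * x h ^ n := by
    simp [ev, eval₂_map]
  exact mul_ne_zero ht (pow_ne_zero n hxh) (hev ▸ hker hfn)

end GenericAvoidance

/-! ### Orbits of automorphism groups of modules -/

section AutRel

/-- Two elements of a module lie in the same orbit under its group of linear automorphisms. For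
`M = ι → A` this is equivalence of columns under `GL`. -/
def AutRel (A : Type*) {M : Type*} [CommRing A] [AddCommGroup M] [Module A M] (x y : M) : Prop :=
  ∃ e : M ≃ₗ[A] M, e x = y

/-- An element of a module is unimodular if some linear form takes the value `1` on it. -/
def IsUnimodular (A : Type*) {M : Type*} [CommRing A] [AddCommGroup M] [Module A M] (x : M) :
    Prop :=
  ∃ φ : M →ₗ[A] A, φ x = 1

variable {A M N : Type*} [CommRing A] [AddCommGroup M] [Module A M] [AddCommGroup N] [Module A N]

namespace AutRel

variable {x y z : M}

@[refl]
lemma refl (x : M) : AutRel A x x := ⟨LinearEquiv.refl A M, rfl⟩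

@[symm]
lemma symm : AutRel A x y → AutRel A y x := by
  rintro ⟨e, rfl⟩
  exact ⟨e.symm, e.symm_apply_apply x⟩

lemma trans : AutRel A x y → AutRel A y z → AutRel A x z := by
  rintro ⟨e, rfl⟩ ⟨e', rfl⟩
  exact ⟨e.trans e', rfl⟩

instance : Trans (AutRel A (M := M)) (AutRel A) (AutRel A) := ⟨trans⟩

lemma isUnimodular : AutRel A x y → IsUnimodular A x → IsUnimodular A y := by
  rintro ⟨e, rfl⟩ ⟨φ, hφ⟩
  exact ⟨φ ∘ₗ e.symm, by simpa using hφ⟩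

lemma map (e : M ≃ₗ[A] N) : AutRel A x y → AutRel A (e x) (e y) := by
  rintro ⟨f, rfl⟩
  exact ⟨(e.symm.trans f).trans e, by simp⟩

lemma prodMk {x' y' : N} : AutRel A x y → AutRel A x' y' → AutRel A (x, x') (y, y') := by
  rintro ⟨e, rfl⟩ ⟨e', rfl⟩
  exact ⟨e.prodCongr e', rfl⟩

lemma add_smul {f : M →ₗ[A] A} {v : M} (hf : f v = 0) (x : M) : AutRel A x (x + f x • v) :=
  ⟨LinearEquiv.transvection hf, LinearEquiv.transvection.apply hf x⟩

lemma prodMk_add_snd (f : M →ₗ[A] N) (x : M) (y : N) : AutRel A (x, y) (x, y + f x) :=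
  ⟨(LinearEquiv.refl A M).skewProd (LinearEquiv.refl A N) f, rfl⟩

lemma prodMk_add_fst (f : N →ₗ[A] M) (x : M) (y : N) : AutRel A (x, y) (x + f y, y) :=
  (prodMk_add_snd f y x).map (LinearEquiv.prodComm A N M)

lemma comp_perm {ι : Type*} (σ : Equiv.Perm ι) (x : ι → A) : AutRel A x (x ∘ σ) :=
  ⟨LinearEquiv.funCongrLeft A A σ, rfl⟩

lemma of_isUnit_det {ι : Type*} [Fintype ι] [DecidableEq ι] {g : Matrix ι ι A} (hg : IsUnit g.det)
    (x : ι → A) : AutRel A x (g.mulVec x) :=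
  ⟨Matrix.toLinearEquiv' g ((Matrix.isUnit_iff_isUnit_det g).2 hg).invertible, rfl⟩

lemma exists_isUnit_det {ι : Type*} [Fintype ι] [DecidableEq ι] {x y : ι → A} :
    AutRel A x y → ∃ g : Matrix ι ι A, IsUnit g.det ∧ g.mulVec x = y := by
  rintro ⟨e, rfl⟩
  refine ⟨LinearMap.toMatrix' e.toLinearMap, ?_, by simp⟩
  rw [LinearMap.det_toMatrix']
  exact e.isUnit_det'

end AutRel

end AutRel

/-! ### Vaserstein's lemma -/

section Vaserstein

variable {A N : Type*} [CommRing A] [AddCommGroup N] [Module A N]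

lemma autRel_prodMk_of_det_eq_one {p q r s : A} (h : p * s - q * r = 1) (b c : A) :
    AutRel A (b, c) (p * b + q * c, r * b + s * c) := by
  have hdet : IsUnit (!![p, q; r, s] : Matrix _ _ A).det := by
    rw [Matrix.det_fin_two_of, h]
    exact isUnit_one
  simpa [Matrix.mulVec, dotProduct, mul_comm] using
    (AutRel.of_isUnit_det hdet ![b, c]).map (LinearEquiv.finTwoArrow A A)

lemma autRel_triple_add_fst (a b c p q : A) :
    AutRel A (a, b, c) (a + (p * b + q * c), b, c) :=
  AutRel.prodMk_add_fst ((LinearMap.mulLeft A p).coprod (LinearMap.mulLeft A q)) a (b, c)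

lemma autRel_triple_add_snd (a b c p q : A) :
    AutRel A (a, b, c) (a, b + p * a + q * c, c) := by
  refine (AutRel.prodMk_add_snd (LinearMap.inl A A A ∘ₗ LinearMap.mulLeft A p) a (b, c)).trans ?_
  simpa using (AutRel.refl a).prodMk (AutRel.prodMk_add_fst (LinearMap.mulLeft A q) (b + p * a) c)

lemma autRel_triple_add_thd (a b c p q : A) :
    AutRel A (a, b, c) (a, b, c + p * a + q * b) := by
  refine (AutRel.prodMk_add_snd (LinearMap.inr A A A ∘ₗ LinearMap.mulLeft A p) a (b, c)).trans ?_
  simpa using (AutRel.refl a).prodMk (AutRel.prodMk_add_snd (LinearMap.mulLeft A q) b (c + p * a))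

-- Modulo `a`, the diagonal matrix `diag(w, w⁻¹)` lifts to `SL₂`; this multiplies `b` by `w` and `c`
-- by `w⁻¹`, and the latter is undone because `w ≡ 1` modulo `b`.
lemma autRel_triple_mul_snd_of_isCoprime {a b w r : A} (hw : w = 1 + r * b) (hwa : IsCoprime w a)
    (c : A) : AutRel A (a, b, c) (a, w * b, c) := by
  obtain ⟨w', μ, h⟩ := hwa.pow_right (n := 2)
  calc AutRel A (a, b, c) (a, w * b + -(a * μ) * c, a * b + w' * c) :=
        (AutRel.refl a).prodMk (autRel_prodMk_of_det_eq_one (by linear_combination h) b c)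
    AutRel A _ (a, w * b, a * b + w' * c) := by
        convert autRel_triple_add_snd a _ _ (μ * c) 0 using 3
        ring
    AutRel A _ (a, w * b, c) := by
        convert autRel_triple_add_thd a _ _ (μ * a * c * (1 + r * b * w') - b) (r * w' ^ 2 * c)
          using 4
        rw [hw] at h ⊢
        linear_combination (-c - c * r * w' * b) * h

lemma autRel_sq_add_mul {a b c : A} {n : N} (hu : IsUnimodular A ((a ^ 2, b, c), n)) (l : A) :
    AutRel A ((a ^ 2, b, c), n) ((a ^ 2, b + l * a, c), n) := by
  obtain ⟨φ, hφ⟩ := hu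
  let v : (A × A × A) × N := ((0, 1, 0), 0)
  let coord : (A × A × A) × N →ₗ[A] A :=
    LinearMap.fst A A A ∘ₗ LinearMap.snd A A (A × A) ∘ₗ LinearMap.fst A (A × A × A) N
  let e := φ v
  let w := 1 + l * a * e ^ 2 * b
  have hw : IsCoprime w (a ^ 2) := IsCoprime.pow_right ⟨1, -(l * e ^ 2 * b), by ring⟩
  have hsplit : ((a ^ 2, w * b, c), n) = ((a ^ 2, b, c), n) + ((w - 1) * b) • v := by
    ext <;> simp [v]
    ring
  let f := φ - e • coord
  have hfv : f v = 0 := by simp [f, coord, v, e]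
  have hf : f ((a ^ 2, w * b, c), n) = 1 - e * b := by
    rw [hsplit, map_add, map_smul, hfv]
    simp [f, coord, hφ]
  calc AutRel A ((a ^ 2, b, c), n) ((a ^ 2, w * b, c), n) :=
        (autRel_triple_mul_snd_of_isCoprime rfl hw c).prodMk (AutRel.refl n)
    AutRel A _ ((a ^ 2, b + l * a, c), n) := by
        have hfv' : ((l * a * (1 + e * b)) • f) v = 0 := by simp [hfv]
        convert AutRel.add_smul hfv' ((a ^ 2, w * b, c), n) using 1
        rw [LinearMap.smul_apply, hf]
        ext <;> simp [v, w]
        ring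

lemma autRel_sq_swap {a b c : A} {n : N} (hu : IsUnimodular A ((a ^ 2, b, c), n)) :
    AutRel A ((a ^ 2, b, c), n) ((b ^ 2, a, c), n) := by
  have hab : AutRel A ((a ^ 2, b, c), n) ((b ^ 2, b - a, c), n) :=
    calc AutRel A ((a ^ 2, b, c), n) ((a ^ 2, b - a, c), n) := by
          simpa [sub_eq_add_neg] using autRel_sq_add_mul hu (-1)
      AutRel A _ ((b ^ 2, b - a, c), n) := by
          convert (autRel_triple_add_fst (a ^ 2) (b - a) c (b + a) 0).prodMk (AutRel.refl n) using 3
          ring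
  calc AutRel A _ ((b ^ 2, b - a, c), n) := hab
    AutRel A _ ((b ^ 2, -a, c), n) := by
        convert autRel_sq_add_mul (hab.isUnimodular hu) (-1) using 4
        ring
    AutRel A _ ((b ^ 2, a, c), n) := by
        have hneg : AutRel A (-a) a := ⟨LinearEquiv.neg A, neg_neg a⟩
        exact ((AutRel.refl _).prodMk (hneg.prodMk (AutRel.refl _))).prodMk (AutRel.refl _)

end Vaserstein

/-! ### Suslin's completion of unimodular rows -/

section Completion

variable {A : Type*} [CommRing A]

lemma isUnit_det_fromBlocks_smul_one_adjugate {m : Type*} [Fintype m] [DecidableEq m]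
    (α : Matrix m m A) {b ε η : A} (h : ε * α.det + η * b = 1) :
    IsUnit (Matrix.fromBlocks α (b • 1) (-η • 1) (ε • α.adjugate)).det := by
  refine Matrix.isUnit_det_of_right_inverse
    (B := Matrix.fromBlocks (ε • α.adjugate) (-b • 1) (η • 1) α) ?_
  rw [Matrix.fromBlocks_multiply, ← Matrix.fromBlocks_one]
  congr 1
  · simp [Matrix.mul_adjugate, smul_smul, ← add_smul, h]
  · simp
  · simp [smul_smul, mul_comm]
  · simp [Matrix.adjugate_mul, smul_smul, ← add_smul, add_comm _ (ε * _), mul_comm b, h]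

-- If `N` has blocks `α` and `diag(C, 1)` in its upper half, clearing the identity block against
-- the remaining rows leaves an invertible matrix containing the rows `(α₁, C)`.
lemma exists_isUnit_det_toRows₂_eq_fromCols {ι n : Type*} [Fintype ι] [Fintype n] [DecidableEq ι]
    [DecidableEq n] {N : Matrix ((ι ⊕ n) ⊕ (ι ⊕ n)) ((ι ⊕ n) ⊕ (ι ⊕ n)) A} (hN : IsUnit N.det)
    {C : Matrix ι ι A} (hNC : N.toBlocks₁₂ = Matrix.fromBlocks C 0 0 1) :
    ∃ U : Matrix ((ι ⊕ n) ⊕ ι) ((ι ⊕ n) ⊕ ι) A, IsUnit U.det ∧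
      U.toRows₂ = Matrix.fromCols N.toBlocks₁₁.toRows₁ C := by
  let ρ := (Equiv.sumAssoc (ι ⊕ n) ι n).trans (Equiv.sumComm _ _)
  let κ := Equiv.sumAssoc (ι ⊕ n) ι n
  let N' := N.submatrix ρ κ
  have hentry (i j) : N (.inl i) (.inr j) = Matrix.fromBlocks C 0 0 1 i j := congr_fun₂ hNC i j
  have hone : N'.toBlocks₂₂ = 1 := by
    ext i j
    exact hentry (.inr i) (.inr j)
  have hzero (i j) : N'.toBlocks₁₂ (.inr i) j = 0 := hentry (.inl i) (.inr j)
  refine ⟨N'.toBlocks₁₁ - N'.toBlocks₁₂ * N'.toBlocks₂₁, ?_, ?_⟩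
  · rw [← Matrix.det_fromBlocks_one₂₂, ← hone, Matrix.fromBlocks_toBlocks,
      ← Matrix.isUnit_iff_isUnit_det, Matrix.isUnit_submatrix_equiv, Matrix.isUnit_iff_isUnit_det]
    exact hN
  · have hrow (i l) : (N'.toBlocks₁₁ - N'.toBlocks₁₂ * N'.toBlocks₂₁) (.inr i) l =
        N (.inl (.inl i)) (κ (.inl l)) := by
      rw [Matrix.sub_apply, Matrix.mul_apply, Finset.sum_eq_zero fun j _ ↦ by rw [hzero, zero_mul],
        sub_zero]
      rfl
    ext i (j | j)
    · exact hrow i (.inl j)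
    · exact (hrow i (.inr j)).trans (hentry (.inl i) (.inl j))

lemma exists_isUnit_det_toRows₂_eq_of_smul_eq {ι n : Type*} [Fintype ι] [Fintype n]
    [DecidableEq ι] [DecidableEq n] {α F X : Matrix (ι ⊕ n) (ι ⊕ n) A} {b : A} {C : Matrix ι ι A}
    (hb : IsCoprime α.det b) (hF : IsUnit F.det)
    (hFC : b • F = Matrix.fromBlocks C 0 0 1 + α.det • X) :
    ∃ U : Matrix ((ι ⊕ n) ⊕ ι) ((ι ⊕ n) ⊕ ι) A, IsUnit U.det ∧
      U.toRows₂ = Matrix.fromCols α.toRows₁ C := by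
  obtain ⟨ε, η, h⟩ := hb
  let N := Matrix.fromBlocks α (b • 1) (-η • 1) (ε • α.adjugate) * Matrix.fromBlocks 1 0 0 F *
    Matrix.fromBlocks 1 (-(α.adjugate * X)) 0 1
  have hN : IsUnit N.det := by
    simpa [N, Matrix.det_mul, hF] using isUnit_det_fromBlocks_smul_one_adjugate α h
  have hNα : N.toBlocks₁₁ = α := by simp [N, Matrix.fromBlocks_multiply]
  have hNC : N.toBlocks₁₂ = Matrix.fromBlocks C 0 0 1 := by
    simp [N, Matrix.fromBlocks_multiply, ← mul_assoc, Matrix.mul_adjugate, hFC]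
  simpa only [hNα] using exists_isUnit_det_toRows₂_eq_fromCols hN hNC

-- Modulo `δ` the matrix `F` is `diag(b², b⁻¹, b⁻¹)`.
lemma exists_det_eq_one_smul_eq_diagonal_add {δ b : A} (h : IsCoprime δ b) :
    ∃ F X : Matrix (Fin 3) (Fin 3) A,
      F.det = 1 ∧ b • F = Matrix.diagonal ![b ^ 3, 1, 1] + δ • X := by
  obtain ⟨ε, η, h⟩ := h
  let t := δ * ε
  have hη : η * b = 1 - t := by linear_combination h
  refine ⟨!![b ^ 2, -t, -(b * t); t * b, η * (1 + t), -t ^ 2; t, 0, η * (1 + t)],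
    ε • !![0, -b, -b ^ 2; b ^ 2, -t, -(b * t); b, 0, -t], ?_, ?_⟩
  · simp only [Matrix.det_fin_three, Matrix.of_apply, Matrix.cons_val]
    linear_combination (1 + t) * (η * b * (1 + t) + t ^ 2 + 1) * hη
  · ext i j
    fin_cases i <;> fin_cases j <;> simp [t] <;> grind

lemma autRel_single_of_isCoprime_det {α : Matrix (Fin 3) (Fin 3) A} {b : A}
    (hb : IsCoprime α.det b) :
    AutRel A (Pi.single 3 1) ![α 0 0, α 0 1, α 0 2, b ^ 3] := by
  obtain ⟨F, X, hF, hFX⟩ := exists_det_eq_one_smul_eq_diagonal_add hb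
  let σ : Fin 1 ⊕ Fin 2 ≃ Fin 3 := finSumFinEquiv
  have hdiag : (Matrix.diagonal ![b ^ 3, 1, 1]).submatrix σ σ =
      Matrix.fromBlocks !![b ^ 3] 0 0 1 := by
    ext (i | i) (j | j) <;> fin_cases i <;> fin_cases j <;> rfl
  obtain ⟨U, hU, hUrow⟩ := exists_isUnit_det_toRows₂_eq_of_smul_eq (α := α.submatrix σ σ)
    (F := F.submatrix σ σ) (X := X.submatrix σ σ) (C := !![b ^ 3])
    (by rwa [Matrix.det_submatrix_equiv_self])
    (by rw [Matrix.det_submatrix_equiv_self, hF]; exact isUnit_one)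
    (by rw [Matrix.det_submatrix_equiv_self, ← hdiag]; exact congr_arg (·.submatrix σ σ) hFX)
  let τ : Fin 4 ≃ (Fin 1 ⊕ Fin 2) ⊕ Fin 1 :=
    finSumFinEquiv.symm.trans (σ.symm.sumCongr (Equiv.refl (Fin 1)))
  have hsingle : (Pi.single 3 1 : Fin 4 → A) = Pi.single (.inr 0) 1 ∘ τ := by
    ext i
    fin_cases i <;> rfl
  have hU' : IsUnit U.transpose.det := by rwa [Matrix.det_transpose]
  have hrow : ![α 0 0, α 0 1, α 0 2, b ^ 3] = U.transpose.mulVec (Pi.single (.inr 0) 1) ∘ τ := by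
    ext i
    have hUi : U (.inr 0) (τ i) = Matrix.fromCols (α.submatrix σ σ).toRows₁ !![b ^ 3] 0 (τ i) :=
      congr_fun₂ hUrow 0 (τ i)
    rw [Function.comp_apply, Matrix.mulVec_single_one, Matrix.col_transpose, Matrix.row_apply, hUi]
    fin_cases i <;> rfl
  rw [hsingle, hrow]
  exact (AutRel.of_isUnit_det hU' (Pi.single (.inr 0) 1)).map (LinearEquiv.funCongrLeft A A τ)

lemma isCoprime_det_of_sum_mul_eq_one {z x₁ x₂ x₃ y₀ y₁ y₂ y₃ : A}
    (h : z * y₀ + x₁ * y₁ + x₂ * y₂ + x₃ * y₃ = 1) :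
    IsCoprime (!![x₁, x₂, x₃ ^ 2;
      -y₃ + y₂ * (-y₁ - x₂ * y₃), -y₁ * (-y₁ - x₂ * y₃), y₁ * x₃ - x₂;
      y₂ * (-y₂ + x₁ * y₃), -y₃ - y₁ * (-y₂ + x₁ * y₃), y₂ * x₃ + x₁] : Matrix _ _ A).det z := by
  let r := 1 + x₁ * y₁ + x₂ * y₂ + x₃ * y₃ + (x₁ * y₁ + x₂ * y₂) * (x₃ * y₃)
  refine ⟨1, y₀ * r, ?_⟩
  rw [Matrix.det_fin_three]
  simp only [Matrix.of_apply, Matrix.cons_val]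
  linear_combination r * h

/-- The coordinates of `A⁴` grouped as in Vaserstein's lemma. -/
def finFourEquivProd (A : Type*) [CommRing A] : (Fin 4 → A) ≃ₗ[A] (A × A × A) × A where
  toFun v := ((v 0, v 1, v 2), v 3)
  invFun v := ![v.1.1, v.1.2.1, v.1.2.2, v.2]
  map_add' _ _ := rfl
  map_smul' _ _ := rfl
  left_inv v := by
    ext i
    fin_cases i <;> rfl
  right_inv _ := rfl

lemma autRel_single_pow_six {z x₁ x₂ x₃ y₀ y₁ y₂ y₃ : A}
    (h : z * y₀ + x₁ * y₁ + x₂ * y₂ + x₃ * y₃ = 1) :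
    AutRel A (Pi.single 0 1) ![z ^ 6, x₁, x₂, x₃] := by
  have hrow : AutRel A (Pi.single 0 1) ![x₃ ^ 2, z ^ 3, x₁, x₂] :=
    calc AutRel A (Pi.single 0 1) (Pi.single 3 1) := by
          convert AutRel.comp_perm (A := A) (Equiv.swap (0 : Fin 4) 3) (Pi.single 0 1) using 1
          ext i
          fin_cases i <;> rfl
      AutRel A _ ![x₁, x₂, x₃ ^ 2, z ^ 3] := by
          simpa using autRel_single_of_isCoprime_det (isCoprime_det_of_sum_mul_eq_one h)
      AutRel A _ ![x₃ ^ 2, z ^ 3, x₁, x₂] := by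
          convert AutRel.comp_perm (Equiv.addRight (2 : Fin 4)) ![x₁, x₂, x₃ ^ 2, z ^ 3] using 1
          ext i
          fin_cases i <;> rfl
  have hrow' : AutRel A ((1, 0, 0), 0) ((x₃ ^ 2, z ^ 3, x₁), x₂) := hrow.map (finFourEquivProd A)
  have hunimodular : IsUnimodular A ((x₃ ^ 2, z ^ 3, x₁), x₂) :=
    hrow'.isUnimodular ⟨LinearMap.fst A A (A × A) ∘ₗ LinearMap.fst A (A × A × A) A, rfl⟩
  calc AutRel A _ ![x₃ ^ 2, z ^ 3, x₁, x₂] := hrow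
    AutRel A _ ![(z ^ 3) ^ 2, x₃, x₁, x₂] :=
        (autRel_sq_swap hunimodular).map (finFourEquivProd A).symm
    AutRel A _ ![z ^ 6, x₁, x₂, x₃] := by
        convert AutRel.comp_perm (Equiv.swap 1 2 * Equiv.swap 2 3) ![(z ^ 3) ^ 2, x₃, x₁, x₂]
          using 1
        ext i
        fin_cases i
        · exact pow_mul z 3 2
        all_goals rfl

lemma exists_mapMatrix_eq_one_add_smul_mul {B n : Type*} [CommRing B] [Fintype n] [DecidableEq n]
    {φ ε : B →+* A} {s : A} (h : ∀ b, s ∣ φ b - ε b) {G : Matrix n n B} (hG : IsUnit G.det) :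
    ∃ γ : Matrix n n A, IsUnit (1 + s • γ).det ∧
      φ.mapMatrix G = (1 + s • γ) * ε.mapMatrix G := by
  choose c hc using h
  have hεG : IsUnit (ε.mapMatrix G).det := by
    rw [← RingHom.map_det]
    exact hG.map ε
  have hφG : IsUnit (φ.mapMatrix G).det := by
    rw [← RingHom.map_det]
    exact hG.map φ
  have hsub : φ.mapMatrix G = ε.mapMatrix G + s • G.map c := by
    ext i j
    simp [← hc]
  have hmul : φ.mapMatrix G = (1 + s • (G.map c * (ε.mapMatrix G)⁻¹)) * ε.mapMatrix G := by
    rw [add_mul, one_mul, Matrix.smul_mul, Matrix.nonsing_inv_mul_cancel_right _ _ hεG, hsub]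
  refine ⟨_, ?_, hmul⟩
  rw [hmul, Matrix.det_mul] at hφG
  exact isUnit_of_mul_isUnit_left hφG

-- Complete the row over the double `A ×_{A/s} A`, where it specialises to `(1, 0, 0, 0)` along the
-- second projection, and divide the first specialisation by the second.
lemma exists_one_add_smul_mulVec_single_eq_pow_six {s : A} {x y : Fin 4 → A} (h : x ⬝ᵥ y = 1)
    (hx : ∀ i, s ∣ x i - Pi.single (M := fun _ ↦ A) 0 1 i)
    (hy : ∀ i, s ∣ y i - Pi.single (M := fun _ ↦ A) 0 1 i) :
    ∃ γ : Matrix (Fin 4) (Fin 4) A, IsUnit (1 + s • γ).det ∧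
      (1 + s • γ).mulVec (Pi.single 0 1) = ![x 0 ^ 6, x 1, x 2, x 3] := by
  let mk := Ideal.Quotient.mk (Ideal.span {s})
  have mk_eq {a b : A} : mk a = mk b ↔ s ∣ a - b := by
    rw [Ideal.Quotient.eq, Ideal.mem_span_singleton]
  let D : Subring (A × A) := (mk.comp (RingHom.fst A A)).eqLocus (mk.comp (RingHom.snd A A))
  let φ : D →+* A := (RingHom.fst A A).comp D.subtype
  let ε : D →+* A := (RingHom.snd A A).comp D.subtype
  let lift (x : Fin 4 → A) (hx : ∀ i, s ∣ x i - Pi.single (M := fun _ ↦ A) 0 1 i) (i : Fin 4) : D :=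
    ⟨(x i, Pi.single (M := fun _ ↦ A) 0 1 i), mk_eq.2 (hx i)⟩
  let X := lift x hx
  let Y := lift y hy
  have hXY : X 0 * Y 0 + X 1 * Y 1 + X 2 * Y 2 + X 3 * Y 3 = 1 := by
    apply Subtype.ext
    rw [dotProduct, Fin.sum_univ_four] at h
    ext
    · exact h
    · simp [X, Y, lift]
  obtain ⟨G, hG, hGX⟩ := (autRel_single_pow_six hXY).exists_isUnit_det
  obtain ⟨γ, hγ, hφε⟩ := exists_mapMatrix_eq_one_add_smul_mul
    (φ := φ) (ε := ε) (fun d ↦ mk_eq.1 d.2) hG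
  have hcol (f : D →+* A) : (f.mapMatrix G).mulVec (Pi.single 0 1) =
      ![f (X 0) ^ 6, f (X 1), f (X 2), f (X 3)] := by
    ext i
    have hGi : G i 0 = ![X 0 ^ 6, X 1, X 2, X 3] i := by
      simpa only [Matrix.mulVec_single_one, Matrix.col_apply] using congr_fun hGX i
    rw [Matrix.mulVec_single_one, Matrix.col_apply, RingHom.mapMatrix_apply, Matrix.map_apply, hGi]
    fin_cases i
    · exact map_pow f _ _
    all_goals rfl
  refine ⟨γ, hγ, ?_⟩
  have hε : (ε.mapMatrix G).mulVec (Pi.single 0 1) = Pi.single 0 1 := by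
    rw [hcol]
    ext i
    fin_cases i <;> simp [ε, X, lift]
  rw [← hε, Matrix.mulVec_mulVec, ← hφε, hcol]
  rfl

lemma autRel_map_one_add_smul {M N : Type*} [AddCommGroup M] [Module A M] [AddCommGroup N]
    [Module A N] {α : M →ₗ[A] N} {β : N →ₗ[A] M} {s : A} (h : β ∘ₗ α = s • LinearMap.id)
    {γ : Module.End A M} (hγ : IsUnit (1 + s • γ)) (x : M) :
    AutRel A (α x) (α ((1 + s • γ) x)) := by
  let g := LinearEquiv.ofBijective (1 + s • γ) ((Module.End.isUnit_iff _).1 hγ)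
  have hg (y : M) : g y = y + s • γ y := rfl
  have hβα (y : M) : β (α y) = s • y := LinearMap.congr_fun h y
  let e : N →ₗ[A] N := LinearMap.id + α ∘ₗ γ ∘ₗ β
  let e' : N →ₗ[A] N := LinearMap.id - α ∘ₗ γ ∘ₗ g.symm.toLinearMap ∘ₗ β
  have hβe (y : N) : β (e y) = g (β y) := by simp [e, hβα, hg]
  have hβe' (y : N) : β (e' y) = g.symm (β y) :=
    calc β (e' y) = β y - s • γ (g.symm (β y)) := by simp [e', hβα]
      _ = g (g.symm (β y)) - s • γ (g.symm (β y)) := by rw [g.apply_symm_apply]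
      _ = g.symm (β y) := by rw [hg, add_sub_cancel_right]
  have hleft : e' ∘ₗ e = LinearMap.id := by
    ext y
    change e y - α (γ (g.symm (β (e y)))) = y
    rw [hβe, g.symm_apply_apply]
    exact add_sub_cancel_right y _
  have hright : e ∘ₗ e' = LinearMap.id := by
    ext y
    change e' y + α (γ (β (e' y))) = y
    rw [hβe']
    exact sub_add_cancel y _
  refine ⟨LinearEquiv.ofLinearMap e e' hright hleft, ?_⟩
  simp [e, hβα]

end Completion

/-! ### Ranks of modules of differentials -/

section DifferentialRank

open KaehlerDifferential MvPolynomial TensorProduct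

open scoped IntermediateField.algebraAdjoinAdjoin in
lemma formallyEtale_of_algebraicIndependent_of_isSeparable {k K ι : Type*} [Field k] [Field K]
    [Algebra k K] [Algebra (MvPolynomial ι k) K] [IsScalarTower k (MvPolynomial ι k) K]
    (h : AlgebraicIndependent k fun i ↦ algebraMap (MvPolynomial ι k) K (X i))
    [Algebra.IsSeparable (IntermediateField.adjoin k
      (Set.range fun i ↦ algebraMap (MvPolynomial ι k) K (X i))) K] :
    Algebra.FormallyEtale (MvPolynomial ι k) K := by
  set v := fun i ↦ algebraMap (MvPolynomial ι k) K (X i)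
  algebraize [h.aevalEquiv.toRingEquiv.toRingHom]
  have : IsScalarTower (MvPolynomial ι k) (Algebra.adjoin k (Set.range v)) K :=
    .of_algebraMap_eq fun p ↦
      DFunLike.congr_fun (aeval_unique (IsScalarTower.toAlgHom k (MvPolynomial ι k) K)) p
  have : Algebra.FormallyEtale (MvPolynomial ι k) (Algebra.adjoin k (Set.range v)) :=
    .of_equiv (.ofRingEquiv (f := h.aevalEquiv.toRingEquiv) fun _ ↦ rfl :
      MvPolynomial ι k ≃ₐ[MvPolynomial ι k] _)
  have : Algebra.FormallyEtale (Algebra.adjoin k (Set.range v))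
      (IntermediateField.adjoin k (Set.range v)) := .of_isLocalization (nonZeroDivisors _)
  have : Algebra.FormallyEtale (IntermediateField.adjoin k (Set.range v)) K := .of_isSeparable _ K
  have : Algebra.FormallyEtale (Algebra.adjoin k (Set.range v)) K :=
    .comp _ (IntermediateField.adjoin k (Set.range v)) _
  exact .comp _ (Algebra.adjoin k (Set.range v)) _

lemma trdeg_eq_rank_kaehlerDifferential {k K : Type u} [Field k] [PerfectField k] [Field K]
    [Algebra k K] [Algebra.EssFiniteType k K] : Algebra.trdeg k K = Module.rank K Ω[K⁄k] := by
  obtain ⟨s, hs, hsep⟩ := exists_isTranscendenceBasis_and_isSeparable_of_perfectField k K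
  algebraize [(aeval ((↑) : s → K) : MvPolynomial s k →ₐ[k] K).toRingHom]
  have : IsScalarTower k (MvPolynomial s k) K := .of_algHom (aeval ((↑) : s → K))
  have hX : (fun i ↦ algebraMap (MvPolynomial s k) K (X i)) = ((↑) : s → K) :=
    funext fun i ↦ aeval_X _ i
  have : Algebra.IsSeparable (IntermediateField.adjoin k
      (Set.range fun i ↦ algebraMap (MvPolynomial s k) K (X i))) K := by
    convert! hsep <;> simp [hX]
  have : Algebra.FormallyEtale (MvPolynomial s k) K :=
    formallyEtale_of_algebraicIndependent_of_isSeparable (hX ▸ hs.1)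
  let b := ((mvPolynomialBasis k s).baseChange K).map
    (tensorKaehlerEquivOfFormallyEtale k (MvPolynomial s k) K)
  rw [rank_eq_card_basis b, ← hs.cardinalMk_eq_trdeg, Cardinal.mk_fintype]

lemma rank_kaehlerDifferential_le_add {k A K : Type u} [CommRing k] [CommRing A] [Field K]
    [Algebra k A] [Algebra A K] [Algebra k K] [IsScalarTower k A K] :
    Module.rank K Ω[K⁄k] ≤ Module.rank K (K ⊗[A] Ω[A⁄k]) + Module.rank K Ω[K⁄A] := by
  have hker : LinearMap.ker (KaehlerDifferential.map k A K K) =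
      LinearMap.range (mapBaseChange k A K) := (exact_mapBaseChange_map k A K).linearMap_ker_eq
  rw [← LinearMap.rank_range_add_rank_ker (KaehlerDifferential.map k A K K), add_comm, hker]
  exact add_le_add (rank_range_le _) (Submodule.rank_le _)

lemma formallyUnramified_residueField {A : Type*} [CommRing A] (p : Ideal A) [p.IsPrime] :
    Algebra.FormallyUnramified A p.ResidueField :=
  .comp _ (Localization.AtPrime p) _

lemma trdeg_residueField_mvPolynomial_le {k A : Type u} {σ : Type} [Field k] [PerfectField k]
    [CommRing A] [Algebra k A] [Algebra.FiniteType k A] [Fintype σ] (q : Ideal (MvPolynomial σ A))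
    [q.IsPrime] :
    Algebra.trdeg k q.ResidueField ≤
      ((Module.finrank q.ResidueField (q.ResidueField ⊗[A] Ω[A⁄k]) + Fintype.card σ : ℕ) :
        Cardinal) := by
  have : Algebra.EssFiniteType k q.ResidueField := .comp k (MvPolynomial σ A) _
  have := formallyUnramified_residueField q
  have hsub : Module.rank q.ResidueField Ω[q.ResidueField⁄MvPolynomial σ A] = 0 :=
    rank_subsingleton' _ _
  have hpol : Module.rank q.ResidueField (q.ResidueField ⊗[MvPolynomial σ A] Ω[MvPolynomial σ A⁄A])
      = Fintype.card σ := rank_eq_card_basis ((mvPolynomialBasis A σ).baseChange q.ResidueField)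
  calc Algebra.trdeg k q.ResidueField = Module.rank q.ResidueField Ω[q.ResidueField⁄k] :=
        trdeg_eq_rank_kaehlerDifferential
    _ ≤ Module.rank q.ResidueField (q.ResidueField ⊗[A] Ω[A⁄k]) +
          Module.rank q.ResidueField Ω[q.ResidueField⁄A] := rank_kaehlerDifferential_le_add
    _ ≤ Module.rank q.ResidueField (q.ResidueField ⊗[A] Ω[A⁄k]) + Fintype.card σ := by
        gcongr
        simpa [hsub, hpol] using
          rank_kaehlerDifferential_le_add (k := A) (A := MvPolynomial σ A) (K := q.ResidueField)
    _ = _ := by rw [← Module.finrank_eq_rank, Nat.cast_add]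

lemma le_of_flat_mvPolynomial {k B : Type u} [Field k] [CommRing B] [Nontrivial B] [Algebra k B]
    [Algebra.FiniteType k B] {d n : ℕ} (hd : ringKrullDim B ≤ d)
    [Algebra (MvPolynomial (Fin n) k) B] [IsScalarTower k (MvPolynomial (Fin n) k) B]
    [Module.Flat (MvPolynomial (Fin n) k) B] :
    n ≤ d := by
  obtain ⟨Q, hQ⟩ := Ideal.exists_maximal B
  obtain ⟨P, -, _, hP⟩ := Ideal.exists_ideal_le_liesOver_of_le
    (q := Q.under (MvPolynomial (Fin n) k)) (p := ⊥) Q bot_le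
  let φ : MvPolynomial (Fin n) k →ₐ[k] P.ResidueField :=
    (IsScalarTower.toAlgHom k B P.ResidueField).comp (IsScalarTower.toAlgHom k _ B)
  have hφ : Function.Injective φ := (injective_iff_map_eq_zero φ).2 fun f hf ↦ by
    have hfP : algebraMap _ B f ∈ P := Ideal.algebraMap_residueField_eq_zero.1 hf
    have hf0 : f ∈ P.under (MvPolynomial (Fin n) k) := hfP
    rwa [← hP.over, Ideal.mem_bot] at hf0
  have hX : AlgebraicIndependent k fun i : Fin n ↦ φ (X i) :=
    (algebraicIndependent_X (Fin n) k).map' hφ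
  have hn := hX.lift_cardinalMk_le_trdeg.trans
    (Cardinal.lift_le.2 (trdeg_residueField_le_of_ringKrullDim_le hd P))
  simpa using hn

lemma ringKrullDim_le_of_isLocalization {A B : Type*} [CommRing A] [CommRing B] [Algebra A B]
    (S : Submonoid A) [IsLocalization S B] : ringKrullDim B ≤ ringKrullDim A :=
  Order.krullDim_le_of_strictMono (PrimeSpectrum.comap (algebraMap A B)) <|
    Monotone.strictMono_of_injective (fun _ _ h ↦ Ideal.comap_mono h)
      (PrimeSpectrum.localization_comap_injective B S)

lemma rankAtStalk_kaehlerDifferential_le {k A : Type u} [Field k] [CommRing A] [Algebra k A]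
    [Algebra.Smooth k A] {d : ℕ} (hd : ringKrullDim A ≤ d) (p : PrimeSpectrum A) :
    Module.rankAtStalk Ω[A⁄k] p ≤ d := by
  obtain ⟨f, hf, n, _, _, _⟩ :=
    Algebra.IsSmoothAt.exists_isStandardEtale_mvPolynomial (R := k) (p := p.asIdeal)
  obtain ⟨q, rfl⟩ : p ∈ Set.range (PrimeSpectrum.comap (algebraMap A (Localization.Away f))) := by
    rwa [PrimeSpectrum.localization_away_comap_range _ f]
  have : Nontrivial (Localization.Away f) := q.nontrivial
  have hn : n ≤ d := le_of_flat_mvPolynomial (k := k)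
    ((ringKrullDim_le_of_isLocalization (B := Localization.Away f) (.powers f)).trans hd)
  calc Module.rankAtStalk Ω[A⁄k] (q.comap (algebraMap A (Localization.Away f)))
      = Module.rankAtStalk (Localization.Away f ⊗[A] Ω[A⁄k]) q :=
        (Module.rankAtStalk_baseChange q).symm
    _ = Module.rankAtStalk Ω[Localization.Away f⁄k] q := by
        rw [Module.rankAtStalk_eq_of_equiv (tensorKaehlerEquivOfFormallyEtale k A _)]
    _ = Module.rankAtStalk
          (Localization.Away f ⊗[MvPolynomial (Fin n) k] Ω[MvPolynomial (Fin n) k⁄k]) q := by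
        rw [Module.rankAtStalk_eq_of_equiv
          (tensorKaehlerEquivOfFormallyEtale k (MvPolynomial (Fin n) k) (Localization.Away f))]
    _ = n := by
        rw [Module.rankAtStalk_eq_finrank_of_free, Pi.natCast_apply,
          Module.finrank_eq_card_basis ((mvPolynomialBasis k (Fin n)).baseChange _),
          Fintype.card_fin]
        rfl
    _ ≤ d := hn

end DifferentialRank

/-! ### A Bertini theorem for perturbed regular sequences -/

section Bertini

open KaehlerDifferential MvPolynomial TensorProduct

lemma mem_smul_top_pi {A ι : Type*} [CommRing A] [Finite ι] {I : Ideal A} {c : ι → A}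
    (hc : ∀ i, c i ∈ I) : c ∈ I • (⊤ : Submodule A (ι → A)) := by
  classical
  have := Fintype.ofFinite ι
  rw [pi_eq_sum_univ' c]
  exact sum_mem fun i _ ↦ Submodule.smul_mem_smul (hc i) trivial

lemma map_mem_smul_top_of_le_comap {A B M N : Type*} [CommRing A] [CommRing B] [Algebra A B]
    [AddCommGroup M] [AddCommGroup N] [Module A M] [Module A N] [Module B N] [IsScalarTower A B N]
    {I : Ideal A} {J : Ideal B} (hIJ : I ≤ J.comap (algebraMap A B)) (φ : M →ₗ[A] N) {m : M}
    (hm : m ∈ I • (⊤ : Submodule A M)) : φ m ∈ J • (⊤ : Submodule B N) := by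
  induction hm using Submodule.smul_induction_on' with
  | smul r hr n _ =>
    rw [map_smul, ← algebraMap_smul B r]
    exact Submodule.smul_mem_smul (hIJ hr) trivial
  | add m _ m' _ ih ih' => exact (map_add φ m m').symm ▸ add_mem ih ih'

variable {k A : Type u} [Field k] [CommRing A] [Algebra k A] {ι J : Type}

lemma span_range_D_eq_top_of_adjoin_eq_top {x : J → A} (hx : Algebra.adjoin k (Set.range x) = ⊤) :
    Submodule.span A (Set.range fun j ↦ D k A (x j)) = ⊤ := by
  set W := Submodule.span A (Set.range fun j ↦ D k A (x j))
  have hD : W.mkQ.compDer (D k A) = 0 := Derivation.ext_of_adjoin_eq_top _ hx <| by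
    rintro _ ⟨j, rfl⟩
    exact (Submodule.Quotient.mk_eq_zero W).2 (Submodule.subset_span ⟨j, rfl⟩)
  rw [eq_top_iff, ← span_range_derivation, Submodule.span_le]
  rintro _ ⟨z, rfl⟩
  exact (Submodule.Quotient.mk_eq_zero W).1 (DFunLike.congr_fun hD z)

/-- The member with coefficients `t` of the family of perturbations `b i + a * y i`, where each
`y i` ranges over the `k`-linear span of `x`. -/
noncomputable def perturbation [Fintype J] (a : A) (b : ι → A) (x : J → A) (t : ι × J → k)
    (i : ι) : A :=
  b i + a * ∑ j, t (i, j) • x j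

variable [Fintype ι]

lemma add_sum_smul_single_eq_perturbation [DecidableEq ι] [Fintype J] (a : A) (b : ι → A)
    (x : J → A) (t : ι × J → k) :
    b + ∑ p, t p • (Pi.single p.1 (a * x p.2) : ι → A) = perturbation a b x t := by
  ext i
  simp [perturbation, Fintype.sum_prod_type, Finset.sum_apply, Pi.single_apply, Finset.mul_sum,
    Finset.sum_ite_irrel]

lemma exists_forall_exists_perturbation_ne_zero [Algebra.FiniteType k A] [Fintype J]
    (hd : ringKrullDim A ≤ Fintype.card ι) {s : A} (hs : s ∈ nonZeroDivisors A) (a : A) (b : ι → A)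
    {x : J → A} {j₀ : J} (hx : x j₀ = 1) :
    ∃ f : MvPolynomial (ι × J) k, f ≠ 0 ∧ ∀ t, eval t f ≠ 0 → ∀ y : A →ₐ[k] k, y s = 0 → y a ≠ 0 →
      ∃ i, y (perturbation a b x t i) ≠ 0 := by
  classical
  have hg (m : ι → A) : ∃ n : ℕ, a ^ n • m ∈ Submodule.span A
      (Set.range fun p : ι × J ↦ (Pi.single p.1 (a * x p.2) : ι → A)) := by
    refine ⟨1, ?_⟩
    have hm : a ^ 1 • m = ∑ i, m i • Pi.single i (a * x j₀) := by
      ext i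
      simp [hx, Finset.sum_apply, Pi.single_apply, mul_comm]
    rw [hm]
    exact sum_mem fun i _ ↦ Submodule.smul_mem _ _ (Submodule.subset_span ⟨(i, j₀), rfl⟩)
  obtain ⟨f, hf, H⟩ := exists_forall_add_sum_notMem_ker_smul (k := k) (J := Ideal.span {s})
    (m := b) hg fun p _ hp _ ↦ by
      rw [(TensorProduct.piScalarRight A p.ResidueField p.ResidueField ι).finrank_eq,
        Module.finrank_fintype_fun_eq_card]
      exact trdeg_residueField_lt_of_mem_nonZeroDivisors hd hs
        (hp (Ideal.mem_span_singleton_self s))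
  refine ⟨f, hf, fun t ht y hys hya ↦ ?_⟩
  by_contra! hc
  refine H t ht y ((Ideal.span_singleton_le_iff_mem _).2 hys) hya ?_
  simp only [algebraMap_smul, add_sum_smul_single_eq_perturbation]
  exact mem_smul_top_pi hc

lemma trdeg_lt_finrank_residueField_tensorProduct_prod [PerfectField k] [Algebra.Smooth k A]
    {σ : Type} [Fintype σ] (h : Fintype.card σ < Fintype.card ι) (q : Ideal (MvPolynomial σ A))
    [q.IsPrime] :
    Algebra.trdeg k q.ResidueField < Module.finrank q.ResidueField (q.ResidueField
      ⊗[MvPolynomial σ A] ((ι → MvPolynomial σ A) × (MvPolynomial σ A ⊗[A] Ω[A⁄k]))) := by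
  classical
  set B := MvPolynomial σ A
  set κ := q.ResidueField
  rw [(TensorProduct.prodRight B κ κ (ι → B) (B ⊗[A] Ω[A⁄k])).finrank_eq, Module.finrank_prod,
    (TensorProduct.piScalarRight B κ κ ι).finrank_eq, Module.finrank_fintype_fun_eq_card,
    (AlgebraTensorModule.cancelBaseChange A B κ κ Ω[A⁄k]).finrank_eq]
  refine (trdeg_residueField_mvPolynomial_le q).trans_lt (Nat.cast_lt.2 ?_)
  rw [add_comm]
  exact Nat.add_lt_add_right h _

section Relation

variable [DecidableEq ι] (i₀ : ι)

/-- The coefficients of the universal linear combination of a family indexed by `ι` in which the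
coefficient of the `i₀`-th member is `1`. -/
noncomputable def universalCoeff (i : ι) : MvPolynomial {i // i ≠ i₀} A :=
  if h : i = i₀ then 1 else X ⟨i, h⟩

/-- The section whose zeros are the pairs consisting of a common zero of `c` and of a linear
relation between the differentials of the `c i` there in which `c i₀` has coefficient `1`. -/
noncomputable def differentialRelation : (ι → A) →ₗ[k]
    (ι → MvPolynomial {i // i ≠ i₀} A) × (MvPolynomial {i // i ≠ i₀} A ⊗[A] Ω[A⁄k]) where
  toFun c := (fun i ↦ C (c i), ∑ i, universalCoeff i₀ i ⊗ₜ D k A (c i))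
  map_add' c c' := Prod.ext (_root_.funext fun i ↦ C_add) <| by
    simp [tmul_add, Finset.sum_add_distrib]
  map_smul' r c := Prod.ext
    (_root_.funext fun i ↦ _root_.map_smul (IsScalarTower.toAlgHom k A (MvPolynomial _ A)) r (c i))
    <| by
    simp [Finset.smul_sum]

lemma differentialRelation_single (i : ι) (z : A) :
    differentialRelation (k := k) i₀ (Pi.single i z) =
      (Pi.single i (C z), universalCoeff i₀ i ⊗ₜ D k A z) := by
  refine Prod.ext (_root_.funext fun j ↦
    Pi.apply_single (fun _ ↦ (C : A → MvPolynomial _ A)) (fun _ ↦ C_0) i z j) ?_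
  refine (Fintype.sum_eq_single i fun j hj ↦ ?_).trans ?_
  · rw [Pi.single_eq_of_ne hj, map_zero, tmul_zero]
  · rw [Pi.single_eq_same]

lemma zero_smul_mem_span_differentialRelation (a : A) {x : J → A} {j₀ : J} (hx₀ : x j₀ = 1)
    (hx : Algebra.adjoin k (Set.range x) = ⊤) (ω : MvPolynomial {i // i ≠ i₀} A ⊗[A] Ω[A⁄k]) :
    (0, (C a : MvPolynomial {i // i ≠ i₀} A) • ω) ∈
      Submodule.span (MvPolynomial {i // i ≠ i₀} A) (Set.range fun p : ι × J ↦
        differentialRelation (k := k) i₀ (Pi.single p.1 (a * x p.2))) := by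
  set B := MvPolynomial {i // i ≠ i₀} A
  set W := Submodule.span B (Set.range fun p : ι × J ↦
    differentialRelation (k := k) i₀ (Pi.single p.1 (a * x p.2)))
  have hspan : Submodule.span B (Set.range fun j ↦ (1 : B) ⊗ₜ[A] D k A (x j)) = ⊤ := by
    rw [← Submodule.baseChange_top, ← span_range_D_eq_top_of_adjoin_eq_top hx,
      Submodule.baseChange_span, ← Set.range_comp]
    rfl
  suffices h : ⊤ ≤ W.comap (LinearMap.inr B (ι → B) _ ∘ₗ LinearMap.lsmul B _ (C a)) from
    h (Submodule.mem_top (x := ω))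
  rw [← hspan, Submodule.span_le]
  rintro _ ⟨j, rfl⟩
  have hsub : ((0 : ι → B), (C a : B) • ((1 : B) ⊗ₜ[A] D k A (x j))) =
      differentialRelation (k := k) i₀ (Pi.single i₀ (a * x j)) -
        (C (x j) : B) • differentialRelation (k := k) i₀ (Pi.single i₀ (a * x j₀)) := by
    rw [differentialRelation_single, differentialRelation_single]
    refine Prod.ext ?_ ?_
    · simp [hx₀, mul_comm, ← Pi.single_smul]
    · simp [hx₀, universalCoeff, tmul_add, smul_tmul', algebraMap_eq, Algebra.smul_def]
  change ((0 : ι → B), (C a : B) • ((1 : B) ⊗ₜ[A] D k A (x j))) ∈ W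
  rw [hsub]
  exact W.sub_mem (Submodule.subset_span ⟨(i₀, j), rfl⟩)
    (W.smul_mem _ (Submodule.subset_span ⟨(i₀, j₀), rfl⟩))

lemma sq_smul_mem_span_differentialRelation (a : A) {x : J → A} {j₀ : J} (hx₀ : x j₀ = 1)
    (hx : Algebra.adjoin k (Set.range x) = ⊤)
    (m : (ι → MvPolynomial {i // i ≠ i₀} A) × (MvPolynomial {i // i ≠ i₀} A ⊗[A] Ω[A⁄k])) :
    (C a : MvPolynomial {i // i ≠ i₀} A) ^ 2 • m ∈
      Submodule.span (MvPolynomial {i // i ≠ i₀} A) (Set.range fun p : ι × J ↦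
        differentialRelation (k := k) i₀ (Pi.single p.1 (a * x p.2))) := by
  have hΩ := zero_smul_mem_span_differentialRelation (k := k) i₀ a hx₀ hx
  set B := MvPolynomial {i // i ≠ i₀} A
  set W := Submodule.span B (Set.range fun p : ι × J ↦
    differentialRelation (k := k) i₀ (Pi.single p.1 (a * x p.2)))
  have hι (i : ι) : (Pi.single i (C a ^ 2), 0) ∈ W := by
    have hsub : ((Pi.single i (C a ^ 2) : ι → B), (0 : B ⊗[A] Ω[A⁄k])) =
        (C a : B) • differentialRelation (k := k) i₀ (Pi.single i (a * x j₀)) -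
          (0, (C a : B) • universalCoeff i₀ i ⊗ₜ[A] D k A a) := by
      rw [differentialRelation_single]
      refine Prod.ext ?_ ?_
      · simp [hx₀, sq, ← Pi.single_smul]
      · simp [hx₀]
    rw [hsub]
    exact W.sub_mem (W.smul_mem (C a) (Submodule.subset_span ⟨(i, j₀), rfl⟩)) (hΩ _)
  have hm : (C a : B) ^ 2 • m =
      ∑ i, m.1 i • (Pi.single i (C a ^ 2), 0) + (0, (C a : B) • (C a : B) • m.2) := by
    refine Prod.ext (_root_.funext fun i ↦ ?_) ?_
    · simp [Prod.fst_sum, Finset.sum_apply, Pi.single_apply, mul_comm]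
    · simp [Prod.snd_sum, sq, mul_smul]
  rw [hm]
  exact W.add_mem (sum_mem fun i _ ↦ W.smul_mem _ (hι i)) (hΩ _)

lemma differentialRelation_mem_ker_smul {c : ι → A} {y : A →ₐ[k] k} (hc : ∀ i, y (c i) = 0)
    {lam : ι → k} (hlam : lam i₀ = 1)
    (h : ∑ i, lam i • D k A (c i) ∈ RingHom.ker y • (⊤ : Submodule A Ω[A⁄k])) :
    differentialRelation (k := k) i₀ c ∈
      RingHom.ker (eval₂Hom y.toRingHom fun i : {i // i ≠ i₀} ↦ lam i) •
        (⊤ : Submodule (MvPolynomial {i // i ≠ i₀} A) _) := by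
  set B := MvPolynomial {i // i ≠ i₀} A
  set I := RingHom.ker (eval₂Hom y.toRingHom fun i : {i // i ≠ i₀} ↦ lam i)
  have hC {r : A} (hr : y r = 0) : (C r : B) ∈ I := by simpa [I, RingHom.mem_ker] using hr
  have hcoeff (i : ι) : universalCoeff i₀ i - C (algebraMap k A (lam i)) ∈ I := by
    by_cases hi : i = i₀ <;> simp [I, RingHom.mem_ker, universalCoeff, hi, hlam]
  have hbase : (1 : B) ⊗ₜ[A] ∑ i, lam i • D k A (c i) ∈ I • (⊤ : Submodule B (B ⊗[A] Ω[A⁄k])) :=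
    map_mem_smul_top_of_le_comap (J := I) (fun r hr ↦ hC hr) (TensorProduct.mk A B Ω[A⁄k] 1) h
  have hsnd : ∑ i, universalCoeff i₀ i ⊗ₜ[A] D k A (c i) =
      ∑ i, (universalCoeff i₀ i - C (algebraMap k A (lam i))) • ((1 : B) ⊗ₜ[A] D k A (c i)) +
        (1 : B) ⊗ₜ[A] ∑ i, lam i • D k A (c i) := by
    rw [tmul_sum, ← Finset.sum_add_distrib]
    refine Finset.sum_congr rfl fun i _ ↦ ?_
    rw [← algebraMap_smul A (lam i), tmul_smul, ← algebraMap_smul B (algebraMap k A (lam i)),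
      algebraMap_eq, ← add_smul, sub_add_cancel, smul_tmul', smul_eq_mul, mul_one]
  rw [← Prod.fst_add_snd (differentialRelation (k := k) i₀ c)]
  refine add_mem
    (Submodule.smul_top_le_comap_smul_top I (LinearMap.inl B (ι → B) (B ⊗[A] Ω[A⁄k]))
      (mem_smul_top_pi fun i ↦ hC (hc i)))
    (Submodule.smul_top_le_comap_smul_top I (LinearMap.inr B (ι → B) (B ⊗[A] Ω[A⁄k])) ?_)
  change ∑ i, universalCoeff i₀ i ⊗ₜ[A] D k A (c i) ∈ _
  rw [hsnd]
  exact add_mem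
    (sum_mem fun i _ ↦ Submodule.smul_mem_smul (hcoeff i) trivial) hbase

end Relation

lemma exists_forall_sum_smul_D_perturbation_notMem [IsAlgClosed k] [Algebra.Smooth k A]
    [Fintype J] (i₀ : ι) (a : A) (b : ι → A) {x : J → A} {j₀ : J} (hx₀ : x j₀ = 1)
    (hx : Algebra.adjoin k (Set.range x) = ⊤) :
    ∃ f : MvPolynomial (ι × J) k, f ≠ 0 ∧ ∀ t, eval t f ≠ 0 → ∀ y : A →ₐ[k] k, y a ≠ 0 →
      (∀ i, y (perturbation a b x t i) = 0) → ∀ lam : ι → k, lam i₀ = 1 →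
        ∑ i, lam i • D k A (perturbation a b x t i) ∉
          RingHom.ker y • (⊤ : Submodule A Ω[A⁄k]) := by
  classical
  obtain ⟨f, hf, H⟩ := exists_forall_add_sum_notMem_ker_smul (k := k) (J := ⊥)
    (m := differentialRelation (k := k) i₀ b)
    (fun m ↦ ⟨2, sq_smul_mem_span_differentialRelation i₀ a hx₀ hx m⟩)
    fun q _ _ _ ↦ trdeg_lt_finrank_residueField_tensorProduct_prod
      (Fintype.card_subtype_lt (x := i₀) (by simp)) q
  refine ⟨f, hf, fun t ht y hya hc lam hlam hmem ↦ ?_⟩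
  let z : MvPolynomial {i // i ≠ i₀} A →ₐ[k] k :=
    { eval₂Hom y.toRingHom fun i : {i // i ≠ i₀} ↦ lam i with
      commutes' := fun r ↦ by simp [MvPolynomial.algebraMap_apply] }
  refine H t ht z bot_le (by simpa [z] using hya) ?_
  simp only [algebraMap_smul, ← _root_.map_smul, ← map_sum, ← map_add,
    add_sum_smul_single_eq_perturbation]
  exact differentialRelation_mem_ker_smul i₀ hc hlam hmem

lemma exists_eval_ne_zero [Infinite k] {τ : Type*} {f : MvPolynomial τ k} (hf : f ≠ 0) :
    ∃ t, eval t f ≠ 0 := by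
  contrapose! hf
  exact MvPolynomial.funext fun t ↦ (hf t).trans (map_zero _).symm

variable (k A) in
lemma exists_fin_adjoin_eq_top [Algebra.FiniteType k A] :
    ∃ (l : ℕ) (x : Fin (l + 1) → A), x 0 = 1 ∧ Algebra.adjoin k (Set.range x) = ⊤ := by
  obtain ⟨s, hs⟩ := (Algebra.FiniteType.out : (⊤ : Subalgebra k A).FG)
  refine ⟨s.card, Fin.cons 1 fun i ↦ (s.equivFin.symm i : A), rfl, top_le_iff.1 ?_⟩
  rw [← hs]
  exact Algebra.adjoin_mono fun z hz ↦ ⟨(s.equivFin ⟨z, hz⟩).succ, by simp⟩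

lemma exists_forall_linearIndependent_D_add_mul [IsAlgClosed k] [Algebra.Smooth k A]
    (hd : ringKrullDim A ≤ Fintype.card ι) {s : A} (hs : s ∈ nonZeroDivisors A) (a : A)
    (b : ι → A) :
    ∃ c : ι → A, ∀ y : A →ₐ[k] k, y a ≠ 0 → (∀ i, y (b i + a * c i) = 0) → y s ≠ 0 ∧
      LinearIndependent k fun i ↦
        (RingHom.ker y • (⊤ : Submodule A Ω[A⁄k])).mkQ (D k A (b i + a * c i)) := by
  obtain ⟨l, x, hx₀, hx⟩ := exists_fin_adjoin_eq_top k A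
  obtain ⟨f, hf, Hf⟩ := exists_forall_exists_perturbation_ne_zero (k := k) hd hs a b hx₀
  choose g hg Hg using fun i₀ ↦
    exists_forall_sum_smul_D_perturbation_notMem (k := k) i₀ a b hx₀ hx
  obtain ⟨t, ht⟩ := exists_eval_ne_zero
    (mul_ne_zero hf (Finset.prod_ne_zero_iff.2 fun i (_ : i ∈ Finset.univ) ↦ hg i))
  rw [map_mul, map_prod, mul_ne_zero_iff, Finset.prod_ne_zero_iff] at ht
  refine ⟨fun i ↦ ∑ j, t (i, j) • x j, fun y hya hc ↦ ⟨fun hys ↦ ?_, ?_⟩⟩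
  · obtain ⟨i, hi⟩ := Hf t ht.1 y hys hya
    exact hi (hc i)
  · rw [Fintype.linearIndependent_iff]
    intro lam hlam i₀
    by_contra h₀
    refine Hg i₀ t (ht.2 i₀ (Finset.mem_univ _)) y hya hc (fun i ↦ (lam i₀)⁻¹ * lam i)
      (inv_mul_cancel₀ h₀) ((Submodule.Quotient.mk_eq_zero _).1 ?_)
    rw [← Submodule.mkQ_apply, map_sum]
    simp only [mul_smul, LinearMap.map_smul_of_tower, ← Finset.smul_sum]
    exact (congrArg _ hlam).trans (smul_zero _)

lemma exists_algHom_ker_eq [IsAlgClosed k] [Algebra.FiniteType k A] (m : Ideal A) [m.IsMaximal] :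
    ∃ y : A →ₐ[k] k, RingHom.ker y = m := by
  let := Ideal.Quotient.field m
  have : Module.Finite k (A ⧸ m) := finite_of_finite_type_of_isJacobsonRing k (A ⧸ m)
  let φ : (A ⧸ m) →ₐ[k] k := IsAlgClosed.lift
  refine ⟨φ.comp (Ideal.Quotient.mkₐ k m), Ideal.ext fun z ↦ ?_⟩
  exact (map_eq_zero_iff φ φ.toRingHom.injective).trans Ideal.Quotient.eq_zero_iff_mem

section Fiber

variable {M : Type*} [AddCommGroup M] [Module k M] [Module A M] [IsScalarTower k A M]
  [Module.Finite A M]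

lemma surjective_of_algHom_base (y : A →ₐ[k] k) : Function.Surjective y :=
  fun r ↦ ⟨algebraMap k A r, y.commutes r⟩

lemma finite_quotient_ker_smul (y : A →ₐ[k] k) :
    Module.Finite k (M ⧸ RingHom.ker y • (⊤ : Submodule A M)) := by
  have : Module.Finite k (A ⧸ RingHom.ker y) := Module.Finite.equiv
    (Ideal.quotientKerAlgEquivOfSurjective (surjective_of_algHom_base y)).symm.toLinearEquiv
  have := Module.Finite.of_restrictScalars_finite A (A ⧸ RingHom.ker y)
    (M ⧸ RingHom.ker y • (⊤ : Submodule A M))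
  exact Module.Finite.trans (A ⧸ RingHom.ker y) _

lemma finrank_quotient_ker_smul_eq_rankAtStalk [Module.Projective A M] (y : A →ₐ[k] k) :
    Module.finrank k (M ⧸ RingHom.ker y • (⊤ : Submodule A M)) =
      Module.rankAtStalk M ⟨RingHom.ker y, RingHom.ker_isPrime y⟩ := by
  set I := RingHom.ker y
  have hI : I.IsMaximal := RingHom.ker_isMaximal_of_surjective y (surjective_of_algHom_base y)
  let := Ideal.Quotient.field I
  have hk : Module.finrank k (A ⧸ I) = 1 := by
    rw [(Ideal.quotientKerAlgEquivOfSurjective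
      (surjective_of_algHom_base y)).toLinearEquiv.finrank_eq, Module.finrank_self]
  have hbot : PrimeSpectrum.comap (algebraMap A (A ⧸ I)) ⊥ = ⟨I, hI.isPrime⟩ :=
    PrimeSpectrum.ext Ideal.mk_ker
  rw [← ((TensorProduct.quotTensorEquivQuotSMul M I).restrictScalars k).finrank_eq,
    ← Module.finrank_mul_finrank k (A ⧸ I), hk, one_mul, ← hbot, ← Module.rankAtStalk_baseChange,
    Module.rankAtStalk_eq_finrank_of_free]
  rfl

end Fiber

lemma subsingleton_of_forall_isMaximal_top_le_smul_top {M : Type*} [AddCommGroup M] [Module A M]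
    [Module.Finite A M] (h : ∀ m : Ideal A, m.IsMaximal → (⊤ : Submodule A M) ≤ m • ⊤) :
    Subsingleton M := by
  rw [← Module.annihilator_eq_top_iff (R := A)]
  by_contra hne
  obtain ⟨m, hm, hle⟩ := Ideal.exists_le_maximal _ hne
  obtain ⟨z, hz, hz₀⟩ :=
    Submodule.exists_sub_one_mem_and_smul_eq_zero_of_fg_of_le_smul m ⊤ Module.Finite.fg_top (h m hm)
  have hzm : z ∈ m := hle (Module.mem_annihilator.2 fun n ↦ hz₀ n trivial)
  exact hm.ne_top ((Ideal.eq_top_iff_one _).2 (by simpa using m.sub_mem hzm hz))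

lemma formallyUnramified_quotient_of_linearIndependent_D [IsAlgClosed k] [Algebra.Smooth k A]
    (hd : ringKrullDim A ≤ Fintype.card ι) {c : ι → A}
    (H : ∀ y : A →ₐ[k] k, (∀ i, y (c i) = 0) → LinearIndependent k fun i ↦
      (RingHom.ker y • (⊤ : Submodule A Ω[A⁄k])).mkQ (D k A (c i))) :
    Algebra.FormallyUnramified k (A ⧸ Ideal.span (Set.range c)) := by
  set C := A ⧸ Ideal.span (Set.range c)
  have hc (i : ι) : algebraMap A C (c i) = 0 :=
    Ideal.Quotient.eq_zero_iff_mem.2 (Ideal.subset_span ⟨i, rfl⟩)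
  refine ⟨subsingleton_of_forall_isMaximal_top_le_smul_top (A := C) fun m hm ↦ ?_⟩
  obtain ⟨z, rfl⟩ := exists_algHom_ker_eq (k := k) m
  let y : A →ₐ[k] k := z.comp (IsScalarTower.toAlgHom k A C)
  have hli := H y fun i ↦ (congrArg z (hc i)).trans (map_zero z)
  have := finite_quotient_ker_smul (M := Ω[A⁄k]) y
  have hspan := hli.span_eq_top_of_card_eq_finrank' <| hli.fintype_card_le_finrank.antisymm <|
    (finrank_quotient_ker_smul_eq_rankAtStalk y).trans_le (rankAtStalk_kaehlerDifferential_le hd _)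
  rw [← KaehlerDifferential.span_range_derivation, Submodule.span_le]
  rintro _ ⟨f, rfl⟩
  obtain ⟨f, rfl⟩ := Ideal.Quotient.mk_surjective f
  obtain ⟨α, hα⟩ := (Submodule.mem_span_range_iff_exists_fun k).1 (hspan ▸ Submodule.mem_top :
    (RingHom.ker y • (⊤ : Submodule A Ω[A⁄k])).mkQ (D k A f) ∈ _)
  have hmem : D k A f - ∑ i, α i • D k A (c i) ∈ RingHom.ker y • (⊤ : Submodule A Ω[A⁄k]) := by
    rw [← Submodule.Quotient.mk_eq_zero, ← Submodule.mkQ_apply, map_sub, map_sum, ← hα]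
    simp only [LinearMap.map_smul_of_tower, sub_self]
  have hmap : KaehlerDifferential.map k k A C (D k A f - ∑ i, α i • D k A (c i)) =
      D k C (algebraMap A C f) := by
    simp [hc]
  rw [KaehlerDifferential.span_range_derivation]
  exact hmap ▸ map_mem_smul_top_of_le_comap (fun r hr ↦ hr) (KaehlerDifferential.map k k A C) hmem

lemma exists_pow_eq_of_formallyUnramified [IsAlgClosed k] [Algebra.EssFiniteType k A]
    [Algebra.FormallyUnramified k A] (a : A) {n : ℕ} (hn : n ≠ 0) : ∃ u : A, u ^ n = a := by
  have := Algebra.FormallyEtale.of_formallyUnramified_of_field k A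
  let e := Algebra.FormallyEtale.equivPiOfIsSepClosed k A
  choose v hv using fun p ↦ IsAlgClosed.exists_pow_nat_eq (e a p) hn.pos
  exact ⟨e.symm v, e.injective (by rw [map_pow, e.apply_symm_apply]; exact _root_.funext hv)⟩

theorem exists_coprime_span_add_mul_and_pow_sub_mem [IsAlgClosed k] [Algebra.Smooth k A]
    (hd : ringKrullDim A ≤ Fintype.card ι) {s : A} (hs : s ∈ nonZeroDivisors A) {a : A}
    {b : ι → A} (hab : Ideal.span {a} ⊔ Ideal.span (Set.range b) = ⊤) {n : ℕ} (hn : n ≠ 0) :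
    ∃ c : ι → A, IsCoprime (Ideal.span (Set.range fun i ↦ b i + a * c i)) (Ideal.span {s}) ∧
      ∃ u : A, u ^ n - a ∈ Ideal.span (Set.range fun i ↦ b i + a * c i) := by
  obtain ⟨c, hc⟩ := exists_forall_linearIndependent_D_add_mul (k := k) hd hs a b
  have ha (y : A →ₐ[k] k) (hy : ∀ i, y (b i + a * c i) = 0) : y a ≠ 0 := by
    intro h₀
    refine RingHom.ker_ne_top y (top_le_iff.1 (hab ▸ sup_le ?_ ?_))
    · exact (Ideal.span_singleton_le_iff_mem _).2 h₀
    · rw [Ideal.span_le]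
      rintro _ ⟨i, rfl⟩
      simpa [h₀] using hy i
  refine ⟨c, ?_, ?_⟩
  · rw [Ideal.isCoprime_iff_sup_eq]
    by_contra hne
    obtain ⟨m, hm, hle⟩ := Ideal.exists_le_maximal _ hne
    obtain ⟨y, rfl⟩ := exists_algHom_ker_eq (k := k) m
    have hy (i : ι) : y (b i + a * c i) = 0 :=
      hle (Ideal.mem_sup_left (Ideal.subset_span ⟨i, rfl⟩))
    exact (hc y (ha y hy) hy).1 (hle (Ideal.mem_sup_right (Ideal.mem_span_singleton_self s)))
  · have := formallyUnramified_quotient_of_linearIndependent_D (k := k) hd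
      fun y hy ↦ (hc y (ha y hy) hy).2
    obtain ⟨u, hu⟩ := exists_pow_eq_of_formallyUnramified (k := k)
      (Ideal.Quotient.mk (Ideal.span (Set.range fun i ↦ b i + a * c i)) a) hn
    obtain ⟨u, rfl⟩ := Ideal.Quotient.mk_surjective u
    exact ⟨u, Ideal.Quotient.eq.1 hu⟩

end Bertini

/-! ### Unimodular elements of projective modules -/

section OrderIdeal

variable {A P Q : Type*} [CommRing A] [AddCommGroup P] [Module A P] [AddCommGroup Q] [Module A Q]

/-- The order ideal of an element `p` of a module: the values at `p` of all linear forms. For a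
projective module it cuts out the vanishing locus of the section `p`. -/
def orderIdeal (A : Type*) {P : Type*} [CommRing A] [AddCommGroup P] [Module A P] (p : P) :
    Ideal A :=
  LinearMap.range (Module.Dual.eval A P p)

lemma mem_orderIdeal_smul_top [Module.Projective A P] (p : P) :
    p ∈ orderIdeal A p • (⊤ : Submodule A P) := by
  obtain ⟨s, hs⟩ := Module.projective_def'.1 (inferInstance : Module.Projective A P)
  have hp : (s p).sum (fun q r ↦ r • q) = p := LinearMap.congr_fun hs p
  have hmem : (s p).sum (fun q r ↦ r • q) ∈ orderIdeal A p • (⊤ : Submodule A P) :=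
    sum_mem fun q _ ↦ Submodule.smul_mem_smul ⟨Finsupp.lapply q ∘ₗ s, rfl⟩ trivial
  rwa [hp] at hmem

lemma exists_autRel_smul_of_orderIdeal_sup_eq_top {p : P} {c : A}
    (h : orderIdeal A p ⊔ Ideal.span {c} = ⊤) (a : A) :
    ∃ (q : P) (a' : A), AutRel A (p, a) (c • q, a') ∧ c ∣ a' - 1 := by
  obtain ⟨_, ⟨f, rfl⟩, _, hr, hfr⟩ := Submodule.mem_sup.1 ((Ideal.eq_top_iff_one _).1 h)
  obtain ⟨r, rfl⟩ := Ideal.mem_span_singleton'.1 hr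
  have hf : f p = 1 - r * c := eq_sub_of_add_eq hfr
  let a' := a + (1 - a) * f p
  have ha' : a' = 1 - (1 - a) * r * c := by
    simp only [a', hf]
    ring
  refine ⟨((1 - a) * r) • p, a', ?_, -((1 - a) * r), by rw [ha']; ring⟩
  calc AutRel A (p, a) (p, a') := AutRel.prodMk_add_snd ((1 - a) • f) p a
    AutRel A _ (c • ((1 - a) * r) • p, a') := by
        convert AutRel.prodMk_add_fst (LinearMap.toSpanSingleton A P (-p)) p a' using 2
        rw [LinearMap.toSpanSingleton_apply, ha']
        module

lemma fst_map_mk_fst_zero {g : P × A →ₗ[A] Q × A} (hg : g (0, 1) = (0, 1)) (x : P × A) :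
    (g (x.1, 0)).1 = (g x).1 := by
  have hx : (x.1, 0) = x - x.2 • ((0 : P), (1 : A)) := by ext <;> simp
  rw [hx, map_sub, map_smul, hg]
  simp

lemma nonempty_linearEquiv_of_prod_of_forall_autRel
    (hP : ∀ x : P × A, IsUnimodular A x → AutRel A x (0, 1)) (e : (P × A) ≃ₗ[A] (Q × A)) :
    Nonempty (P ≃ₗ[A] Q) := by
  obtain ⟨f, hf⟩ := hP (e.symm (0, 1)) ⟨LinearMap.snd A Q A ∘ₗ e, by simp⟩
  let g := f.symm.trans e
  have hg : g (0, 1) = (0, 1) := by simp [g, ← hf]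
  have hg' : g.symm (0, 1) = (0, 1) := g.symm_apply_eq.2 hg.symm
  refine ⟨LinearEquiv.ofLinearMap (LinearMap.fst A Q A ∘ₗ g ∘ₗ LinearMap.inl A P A)
    (LinearMap.fst A P A ∘ₗ g.symm ∘ₗ LinearMap.inl A Q A) ?_ ?_⟩
  · ext q
    exact (fst_map_mk_fst_zero (g := g.toLinearMap) hg (g.symm (q, 0))).trans (by simp)
  · ext p
    exact (fst_map_mk_fst_zero (g := g.symm.toLinearMap) hg' (g (p, 0))).trans (by simp)

end OrderIdeal

section Bass

open TensorProduct

variable {A : Type u} {P : Type*} [CommRing A] [AddCommGroup P] [Module A P] [Module.Finite A P]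
  [Module.Projective A P]

theorem exists_orderIdeal_add_smul_sup_eq_top {k : Type u} [Field k] [IsAlgClosed k] [Algebra k A]
    [Algebra.FiniteType k A] {J : Ideal A}
    (hJ : ∀ p : PrimeSpectrum A, J ≤ p.asIdeal →
      Algebra.trdeg k p.asIdeal.ResidueField < Module.rankAtStalk P p)
    {p : P} {a : A} (hu : IsUnimodular A (p, a)) :
    ∃ q : P, orderIdeal A (p + a • q) ⊔ J = ⊤ := by
  obtain ⟨n, s, hs⟩ :=
    Submodule.fg_iff_exists_fin_generating_family.1 (Module.Finite.fg_top (R := A) (M := P))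
  have hspan (m : P) : ∃ n : ℕ, a ^ n • m ∈ Submodule.span A (Set.range (a • s)) := by
    have hm : m ∈ Submodule.span A (Set.range s) := hs ▸ Submodule.mem_top
    obtain ⟨c, rfl⟩ := (Submodule.mem_span_range_iff_exists_fun A).1 hm
    refine ⟨1, (Submodule.mem_span_range_iff_exists_fun A).2 ⟨c, ?_⟩⟩
    simp [Finset.smul_sum, smul_comm a]
  obtain ⟨f, hf, H⟩ := exists_forall_add_sum_notMem_ker_smul (k := k) (J := J) (m := p) hspan
    fun q _ hJq _ ↦ by
      exact (hJ ⟨q, ‹_›⟩ hJq).trans_eq (congrArg _ q.finrank_fiber_eq_rankAtStalk.symm)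
  obtain ⟨t, ht⟩ := exists_eval_ne_zero hf
  let q := ∑ j, algebraMap k A (t j) • s j
  refine ⟨q, ?_⟩
  by_contra hne
  obtain ⟨m, hm, hle⟩ := Ideal.exists_le_maximal _ hne
  obtain ⟨y, rfl⟩ := exists_algHom_ker_eq (k := k) m
  obtain ⟨hp, hJy⟩ := sup_le_iff.1 hle
  by_cases ha : y a = 0
  · obtain ⟨φ, hφ⟩ := hu
    have hφp : y (φ (p + a • q, 0)) = 0 := hp ⟨φ ∘ₗ LinearMap.inl A P A, rfl⟩
    have hpa : (p, a) = (p + a • q, 0) + a • (-q, 1) := by ext <;> simp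
    have hyφ := congrArg y hφ
    rw [hpa, map_add, map_smul, map_add, hφp, smul_eq_mul, map_mul, ha] at hyφ
    simp at hyφ
  · have hsum : p + ∑ j, algebraMap k A (t j) • (a • s) j = p + a • q := by
      simp [q, Finset.smul_sum, smul_comm a]
    exact H t ht y hJy ha (hsum ▸ Submodule.smul_mono_left hp (mem_orderIdeal_smul_top _))

theorem autRel_zero_one_of_lt_rankAtStalk (k : Type u) [Field k] [IsAlgClosed k] [Algebra k A]
    [Algebra.FiniteType k A] {d : ℕ} (hd : ringKrullDim A ≤ d)
    (hP : ∀ p : PrimeSpectrum A, d < Module.rankAtStalk P p) {x : P × A} (hx : IsUnimodular A x) :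
    AutRel A x (0, 1) := by
  obtain ⟨p, a⟩ := x
  obtain ⟨q, hq⟩ := exists_orderIdeal_add_smul_sup_eq_top (k := k) (J := Ideal.span {0})
    (fun p _ ↦ (trdeg_residueField_le_of_ringKrullDim_le (k := k) hd p.asIdeal).trans_lt
      (Nat.cast_lt.2 (hP p))) hx
  obtain ⟨q', a', h, ha'⟩ := exists_autRel_smul_of_orderIdeal_sup_eq_top hq a
  rw [zero_dvd_iff, sub_eq_zero] at ha'
  rw [zero_smul, ha'] at h
  exact (AutRel.prodMk_add_fst (LinearMap.toSpanSingleton A P q) p a).trans h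

end Bass

/-! ### Generic trivialization -/

section GenericTrivialization

open TensorProduct

variable {A P : Type*} [CommRing A] [AddCommGroup P] [Module A P]

lemma exists_comp_eq_smul_id_of_isLocalizedModule {M M' N N' : Type*} [AddCommGroup M]
    [AddCommGroup M'] [AddCommGroup N] [AddCommGroup N'] [Module A M] [Module A M'] [Module A N]
    [Module A N'] [Module.FinitePresentation A M] [Module.FinitePresentation A N] (S : Submonoid A)
    {f : M →ₗ[A] M'} {g : N →ₗ[A] N'} [IsLocalizedModule S f] [IsLocalizedModule S g]
    (hf : Function.Injective f) (hg : Function.Injective g) (e : M' ≃ₗ[A] N') :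
    ∃ s ∈ S, ∃ (α : M →ₗ[A] N) (β : N →ₗ[A] M),
      α ∘ₗ β = s • LinearMap.id ∧ β ∘ₗ α = s • LinearMap.id := by
  obtain ⟨α, s, hα⟩ := Module.FinitePresentation.exists_lift_of_isLocalizedModule S g (e ∘ₗ f)
  obtain ⟨β, t, hβ⟩ := Module.FinitePresentation.exists_lift_of_isLocalizedModule S f (e.symm ∘ₗ g)
  replace hα (x : M) : g (α x) = (s : A) • e (f x) := LinearMap.congr_fun hα x
  replace hβ (x : N) : f (β x) = (t : A) • e.symm (g x) := LinearMap.congr_fun hβ x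
  refine ⟨s * t, mul_mem s.2 t.2, α, β, LinearMap.ext fun x ↦ hg ?_, LinearMap.ext fun x ↦ hf ?_⟩
  · simp [hα, hβ, mul_smul]
  · simp [hα, hβ, mul_smul, smul_comm (t : A)]

lemma injective_of_isLocalizedModule_nonZeroDivisors {M M' : Type*} [AddCommGroup M]
    [AddCommGroup M'] [Module A M] [Module A M'] [Module.Flat A M] (f : M →ₗ[A] M')
    [IsLocalizedModule (nonZeroDivisors A) f] : Function.Injective f :=
  (IsLocalizedModule.injective_iff_isRegular (nonZeroDivisors A) f).2 fun c ↦
    Module.Flat.isSMulRegular_of_nonZeroDivisors c.2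

variable [Module.Finite A P]

lemma finrank_tensorProduct_eq_of_rankAtStalk_eq [Module.Flat A P] {n : ℕ}
    (h : ∀ p, Module.rankAtStalk (R := A) P p = n) (K : Type*) [Field K] [Algebra A K] :
    Module.finrank K (K ⊗[A] P) = n := by
  have hK := Module.rankAtStalk_baseChange (R := A) (M := P) (S := K) ⟨⊥, Ideal.isPrime_bot⟩
  rwa [h, Module.rankAtStalk_eq_finrank_of_free] at hK

lemma nonempty_basis_fractionRing_tensorProduct [IsNoetherianRing A] [Module.Flat A P] {n : ℕ}
    (h : ∀ p, Module.rankAtStalk (R := A) P p = n) :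
    Nonempty (Module.Basis (Fin n) (FractionRing A) (FractionRing A ⊗[A] P)) := by
  have : IsNoetherianRing (FractionRing A) :=
    IsLocalization.isNoetherianRing (nonZeroDivisors A) _ inferInstance
  have : IsFractionRing (FractionRing A) (FractionRing A) := by
    rw [IsFractionRing.self_iff_nonZeroDivisors_eq_isUnit]
    exact IsFractionRing.nonZeroDivisors_eq_isUnit A (FractionRing A)
  refine Module.nonempty_basis_of_flat_of_finrank_eq _ _ n fun m ↦ ?_
  let := Ideal.Quotient.field m.1
  refine finrank_tensorProduct_eq_of_rankAtStalk_eq (fun p ↦ ?_) _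
  rw [Module.rankAtStalk_baseChange, h]

theorem exists_comp_eq_smul_id_of_rankAtStalk_eq [IsNoetherianRing A] [Module.Projective A P]
    {n : ℕ} (h : ∀ p, Module.rankAtStalk (R := A) P p = n) :
    ∃ s ∈ nonZeroDivisors A, ∃ (α : (Fin n → A) →ₗ[A] P) (β : P →ₗ[A] (Fin n → A)),
      α ∘ₗ β = s • LinearMap.id ∧ β ∘ₗ α = s • LinearMap.id := by
  obtain ⟨b⟩ := nonempty_basis_fractionRing_tensorProduct h
  let f : (Fin n → A) →ₗ[A] (Fin n → FractionRing A) :=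
    LinearMap.compLeft (Algebra.linearMap A (FractionRing A)) (Fin n)
  let g : P →ₗ[A] FractionRing A ⊗[A] P := TensorProduct.mk A (FractionRing A) P 1
  have := Module.finitePresentation_of_projective A P
  have : IsLocalizedModule (nonZeroDivisors A) f :=
    IsLocalizedModule.pi (nonZeroDivisors A) fun _ ↦ Algebra.linearMap A (FractionRing A)
  exact exists_comp_eq_smul_id_of_isLocalizedModule (nonZeroDivisors A)
    (injective_of_isLocalizedModule_nonZeroDivisors f)
    (injective_of_isLocalizedModule_nonZeroDivisors g) (b.equivFun.symm.restrictScalars A)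

end GenericTrivialization

/-! ### Cancellation -/

section RankThree

variable {A P : Type*} [CommRing A] [AddCommGroup P] [Module A P]

lemma autRel_map_tail_one_add_smul_mulVec {n : ℕ} {α : (Fin n → A) →ₗ[A] P}
    {β : P →ₗ[A] (Fin n → A)} {s : A} (h : β ∘ₗ α = s • LinearMap.id)
    {γ : Matrix (Fin (n + 1)) (Fin (n + 1)) A} (hγ : IsUnit (1 + s • γ).det) (v : Fin (n + 1) → A) :
    AutRel A (α (Fin.tail v), v 0)
      (α (Fin.tail ((1 + s • γ).mulVec v)), (1 + s • γ).mulVec v 0) := by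
  let e := (Fin.consLinearEquiv A fun _ : Fin (n + 1) ↦ A).symm.trans (LinearEquiv.prodComm A _ _)
  let α' := α.prodMap LinearMap.id ∘ₗ e.toLinearMap
  let β' := e.symm.toLinearMap ∘ₗ β.prodMap (s • LinearMap.id)
  have hβα : β' ∘ₗ α' = s • LinearMap.id := by
    refine LinearMap.ext fun w ↦ e.symm_apply_eq.2 (Prod.ext ?_ rfl)
    exact LinearMap.congr_fun h (e w).1
  have hmulVec (w : Fin (n + 1) → A) :
      (1 + s • Matrix.toLin' γ) w = (1 + s • γ).mulVec w := by
    simp [Matrix.add_mulVec, Matrix.smul_mulVec]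
  have hunit : IsUnit (1 + s • Matrix.toLin' γ) := by
    convert ((Matrix.isUnit_iff_isUnit_det _).2 hγ).map Matrix.toLinAlgEquiv' using 1
    simp
    rfl
  have := autRel_map_one_add_smul hβα hunit v
  rw [hmulVec] at this
  exact this

lemma autRel_map_smul_pow_six_of_isCoprime {α : (Fin 3 → A) →ₗ[A] P} {β : P →ₗ[A] (Fin 3 → A)}
    {s : A} (h : β ∘ₗ α = s • LinearMap.id) {z : A} {c : Fin 3 → A} (hz : s ∣ z - 1)
    (hzc : IsCoprime (Ideal.span {z}) (Ideal.span {s ^ 2} * Ideal.span (Set.range c))) :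
    AutRel A (0, 1) (α (s • c), z ^ 6) := by
  obtain ⟨_, hy₀, _, hy, hsum⟩ := Ideal.isCoprime_iff_exists.1 hzc
  obtain ⟨y₀, rfl⟩ := Ideal.mem_span_singleton.1 hy₀
  obtain ⟨_, hyc, rfl⟩ := Ideal.mem_span_singleton_mul.1 hy
  obtain ⟨y, rfl⟩ := Ideal.mem_span_range_iff_exists_fun.1 hyc
  rw [Fin.sum_univ_three] at hsum
  have hy₀ : s ∣ y₀ - 1 := by
    obtain ⟨r, hr⟩ := hz
    exact ⟨-(r * y₀) - s * (y 0 * c 0 + y 1 * c 1 + y 2 * c 2),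
      by linear_combination hsum - y₀ * hr⟩
  obtain ⟨γ, hγ, hcol⟩ := exists_one_add_smul_mulVec_single_eq_pow_six (s := s)
    (x := ![z, s * c 0, s * c 1, s * c 2]) (y := ![y₀, s * y 0, s * y 1, s * y 2])
    (by simp [dotProduct, Fin.sum_univ_four]; linear_combination hsum)
    (by intro i; fin_cases i <;> simp [hz]) (by intro i; fin_cases i <;> simp [hy₀])
  have hsc : Fin.tail ![z ^ 6, s * c 0, s * c 1, s * c 2] = s • c := by
    ext i
    fin_cases i <;> rfl
  have hsingle : Fin.tail (Pi.single 0 1 : Fin 4 → A) = 0 := by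
    ext i
    simp [Fin.tail]
  simpa [hcol, hsc, hsingle] using autRel_map_tail_one_add_smul_mulVec h hγ (Pi.single 0 1)

lemma autRel_map_smul_add_of_mem {ι : Type*} [Finite ι] {α : (ι → A) →ₗ[A] P}
    {β : P →ₗ[A] (ι → A)} {s : A} (h : β ∘ₗ α = s • LinearMap.id) {c : ι → A} {r : A}
    (hr : r ∈ Ideal.span {s ^ 2} * Ideal.span (Set.range c)) (a : A) :
    AutRel A (α (s • c), a) (α (s • c), a + r) := by
  have := Fintype.ofFinite ι
  obtain ⟨_, hrc, rfl⟩ := Ideal.mem_span_singleton_mul.1 hr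
  obtain ⟨f, rfl⟩ := Ideal.mem_span_range_iff_exists_fun.1 hrc
  have hβα (v : ι → A) : β (α v) = s • v := LinearMap.congr_fun h v
  convert AutRel.prodMk_add_snd (Fintype.linearCombination A f ∘ₗ β) (α (s • c)) a using 3
  simp [hβα, Fintype.linearCombination_apply, Finset.mul_sum, sq, mul_assoc, mul_comm (c _)]

lemma span_sup_span_range_eq_top_of_isUnimodular_map {ι : Type*} [Finite ι] {α : (ι → A) →ₗ[A] P}
    {b : ι → A} {a : A} (h : IsUnimodular A (α b, a)) :
    Ideal.span {a} ⊔ Ideal.span (Set.range b) = ⊤ := by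
  classical
  have := Fintype.ofFinite ι
  obtain ⟨φ, hφ⟩ := h
  have hb : φ (α b, 0) ∈ Ideal.span (Set.range b) := by
    change (φ ∘ₗ LinearMap.inl A P A ∘ₗ α) b ∈ _
    rw [LinearMap.pi_apply_eq_sum_univ]
    exact Ideal.sum_mem _ fun i _ ↦
      Ideal.mul_mem_right _ _ (Ideal.subset_span (Set.mem_range_self i))
  have hsum : (α b, a) = a • ((0 : P), (1 : A)) + (α b, 0) := by simp
  rw [Ideal.eq_top_iff_one, ← hφ, hsum, map_add, map_smul]
  exact add_mem (Ideal.mem_sup_left (Ideal.mul_mem_right _ _ (Ideal.mem_span_singleton_self a)))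
    (Ideal.mem_sup_right hb)

lemma isCoprime_span_range_add_mul {ι : Type*} {a : A} {b : ι → A}
    (h : Ideal.span {a} ⊔ Ideal.span (Set.range b) = ⊤) (t : ι → A) :
    IsCoprime (Ideal.span {a}) (Ideal.span (Set.range fun i ↦ b i + a * t i)) := by
  rw [Ideal.isCoprime_iff_sup_eq, ← top_le_iff, ← h]
  refine sup_le le_sup_left (Ideal.span_le.2 (Set.range_subset_iff.2 fun i ↦ ?_))
  rw [← add_sub_cancel_right (b i) (a * t i)]
  exact sub_mem (Ideal.mem_sup_right (Ideal.subset_span (Set.mem_range_self i)))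
    (Ideal.mem_sup_left (Ideal.mul_mem_right _ _ (Ideal.mem_span_singleton_self a)))

lemma exists_pow_sub_mem_mul_and_isCoprime {I J : Ideal A} (hIJ : IsCoprime I J) {a u : A} {n : ℕ}
    (hn : n ≠ 0) (ha : a - 1 ∈ I) (hu : u ^ n - a ∈ J) (haJ : IsCoprime (Ideal.span {a}) J) :
    ∃ z, z - 1 ∈ I ∧ z ^ n - a ∈ I * J ∧ IsCoprime (Ideal.span {z}) (I * J) := by
  obtain ⟨i, hi, j, hj, hij⟩ := Ideal.isCoprime_iff_exists.1 hIJ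
  let z := j + i * u
  have hzI : z - 1 ∈ I := by
    convert I.mul_mem_right (u - 1) hi using 1
    linear_combination hij
  have hzJ : z ^ n - a ∈ J := by
    have hzu : z - u ∈ J := by
      convert J.mul_mem_right (1 - u) hj using 1
      linear_combination u * hij
    simpa using J.add_mem (J.mem_of_dvd (sub_dvd_pow_sub_pow z u n) hzu) hu
  have hz : z ∈ Ideal.span {z} := Ideal.mem_span_singleton_self z
  refine ⟨z, hzI, ?_, IsCoprime.mul_right ?_ ?_⟩
  · rw [Ideal.mul_eq_inf_of_isCoprime hIJ]
    have hz1 : z ^ n - 1 ∈ I := by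
      simpa using I.mem_of_dvd (sub_dvd_pow_sub_pow z 1 n) hzI
    exact ⟨by simpa using I.sub_mem hz1 ha, hzJ⟩
  · exact Ideal.isCoprime_iff_exists.2 ⟨z, hz, 1 - z, by simpa using I.neg_mem hzI, by ring⟩
  · rw [Ideal.isCoprime_iff_sup_eq, ← top_le_iff, ← Ideal.isCoprime_iff_sup_eq.1 haJ]
    refine sup_le ((Ideal.span_singleton_le_iff_mem _).2 ?_) le_sup_right
    rw [← sub_sub_cancel (z ^ n) a]
    exact Submodule.sub_mem _ (Ideal.mem_sup_left (Ideal.pow_mem_of_mem _ hz n hn.pos))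
      (Ideal.mem_sup_right hzJ)

end RankThree

section Transitivity

variable {A : Type u} {P : Type*} [CommRing A] [AddCommGroup P] [Module A P]

lemma autRel_zero_one_of_sq_dvd (k : Type u) [Field k] [IsAlgClosed k] [Algebra k A]
    [Algebra.Smooth k A] (hd : ringKrullDim A ≤ 3) {α : (Fin 3 → A) →ₗ[A] P}
    {β : P →ₗ[A] (Fin 3 → A)} {s : A} (hs : s ∈ nonZeroDivisors A)
    (hαβ : α ∘ₗ β = s • LinearMap.id) (hβα : β ∘ₗ α = s • LinearMap.id) {q : P} {a : A}
    (ha : s ^ 2 ∣ a - 1) (hu : IsUnimodular A (s ^ 2 • q, a)) :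
    AutRel A (s ^ 2 • q, a) (0, 1) := by
  let b := β q
  have hq : (s • α) b = s ^ 2 • q := by
    rw [sq, mul_smul]
    exact congrArg (s • ·) (LinearMap.congr_fun hαβ q)
  have hab : Ideal.span {a} ⊔ Ideal.span (Set.range b) = ⊤ :=
    span_sup_span_range_eq_top_of_isUnimodular_map (α := s • α) (hq ▸ hu)
  obtain ⟨t, hcs, u, hua⟩ :=
    exists_coprime_span_add_mul_and_pow_sub_mem (k := k) (ι := Fin 3) hd hs hab (n := 6) (by simp)
  have hac := isCoprime_span_range_add_mul hab t
  set c : Fin 3 → A := fun i ↦ b i + a * t i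
  have hsC : IsCoprime (Ideal.span {s ^ 2}) (Ideal.span (Set.range c)) := by
    rw [← Ideal.span_singleton_pow]
    exact hcs.symm.pow_left
  obtain ⟨z, hz, hza, hzc⟩ := exists_pow_sub_mem_mul_and_isCoprime hsC (by simp)
    (Ideal.mem_span_singleton.2 ha) hua hac
  have hsz : s ∣ z - 1 := (Dvd.intro_left _ (sq s).symm).trans (Ideal.mem_span_singleton.1 hz)
  calc AutRel A (s ^ 2 • q, a) (α (s • c), a) := by
        convert AutRel.prodMk_add_fst (LinearMap.toSpanSingleton A P (α (s • t))) _ a using 2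
        have hc : c = b + a • t := rfl
        rw [LinearMap.toSpanSingleton_apply, ← hq, hc]
        simp [smul_comm a s]
    AutRel A _ (α (s • c), z ^ 6) := by
        simpa using autRel_map_smul_add_of_mem hβα hza a
    AutRel A _ (0, 1) := (autRel_map_smul_pow_six_of_isCoprime hβα hsz hzc).symm

theorem autRel_zero_one_of_rankAtStalk_eq_three (k : Type u) [Field k] [IsAlgClosed k]
    [Algebra k A] [Algebra.Smooth k A] [Module.Finite A P] [Module.Projective A P]
    (hd : ringKrullDim A ≤ 3) (hP : ∀ p : PrimeSpectrum A, Module.rankAtStalk P p = 3) {x : P × A}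
    (hx : IsUnimodular A x) : AutRel A x (0, 1) := by
  have := Algebra.FiniteType.isNoetherianRing k A
  obtain ⟨s, hs, α, β, hαβ, hβα⟩ := exists_comp_eq_smul_id_of_rankAtStalk_eq hP
  obtain ⟨p, a⟩ := x
  obtain ⟨q, hq⟩ := exists_orderIdeal_add_smul_sup_eq_top (k := k) (J := Ideal.span {s ^ 2})
    (fun p hp ↦ (hP p).symm ▸ trdeg_residueField_lt_of_mem_nonZeroDivisors (k := k) (d := 3) hd
      (pow_mem hs 2) (hp (Ideal.mem_span_singleton_self _))) hx
  obtain ⟨q', a', h, ha'⟩ := exists_autRel_smul_of_orderIdeal_sup_eq_top hq a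
  have hpa : AutRel A (p, a) (s ^ 2 • q', a') :=
    (AutRel.prodMk_add_fst (LinearMap.toSpanSingleton A P q) p a).trans h
  exact hpa.trans (autRel_zero_one_of_sq_dvd k hd hs hαβ hβα ha' (hpa.isUnimodular hx))

end Transitivity

lemma rankAtStalk_eq_of_hasConstantRank {A M : Type*} [CommRing A] [AddCommGroup M] [Module A M]
    {r : ℕ} (h : HasConstantRank A M r) (p : PrimeSpectrum A) : Module.rankAtStalk M p = r := by
  obtain ⟨e⟩ := h p.asIdeal
  rw [Module.rankAtStalk, e.finrank_eq, Module.finrank_fin_fun]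

/-- Splitting off the first coordinate of the free summand of `M ⊕ Aⁿ⁺¹`. -/
def prodFinSuccEquiv (A M : Type*) [CommRing A] [AddCommGroup M] [Module A M] (n : ℕ) :
    (M × (Fin (n + 1) → A)) ≃ₗ[A] (M × (Fin n → A)) × A :=
  ((LinearEquiv.refl A M).prodCongr
    ((Fin.consLinearEquiv A fun _ ↦ A).symm.trans (LinearEquiv.prodComm A _ _))).trans
    (LinearEquiv.prodAssoc A M (Fin n → A) A).symm

theorem stably_isomorphic_rank_three_implies_isomorphic_general (k : Type u) [Field k]
    [IsAlgClosed k] {R : Type u} [CommRing R] [Algebra k R] [Algebra.Smooth k R]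
    (hdim : ringKrullDim R ≤ 3) {P Q : Type*} [AddCommGroup P] [Module R P] [Module.Finite R P]
    [Module.Projective R P] [AddCommGroup Q] [Module R Q] {r : ℕ} (hr : 3 ≤ r)
    (hP : HasConstantRank R P r) {n : ℕ} (e : (P × (Fin n → R)) ≃ₗ[R] (Q × (Fin n → R))) :
    Nonempty (P ≃ₗ[R] Q) := by
  induction n with
  | zero => exact ⟨LinearEquiv.prodUnique.symm.trans (e.trans LinearEquiv.prodUnique)⟩
  | succ n ih =>
    have hrank (p : PrimeSpectrum R) : Module.rankAtStalk (P × (Fin n → R)) p = r + n := by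
      have := p.nontrivial
      rw [Module.rankAtStalk_prod, Pi.add_apply, rankAtStalk_eq_of_hasConstantRank hP,
        Module.rankAtStalk_eq_finrank_of_free]
      simp
    have htrans (x : (P × (Fin n → R)) × R) (hx : IsUnimodular R x) : AutRel R x (0, 1) := by
      obtain h | h := (hr.trans (Nat.le_add_right r n)).eq_or_lt
      · exact autRel_zero_one_of_rankAtStalk_eq_three k hdim (by simpa [← h] using hrank) hx
      · exact autRel_zero_one_of_lt_rankAtStalk k hdim (fun p ↦ (hrank p).symm ▸ h) hx
    obtain ⟨e'⟩ := nonempty_linearEquiv_of_prod_of_forall_autRel htrans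
      ((prodFinSuccEquiv R P n).symm.trans (e.trans (prodFinSuccEquiv R Q n)))
    exact ih e'

/-- Stably isomorphic rank 3 vector bundles on a smooth affine threefold over an
algebraically closed field of characteristic ≠ 2 are isomorphic. -/
theorem stably_isomorphic_rank_three_implies_isomorphic
    (k : Type u) [Field k] [IsAlgClosed k] (hchar : ringChar k ≠ 2)
    (R : Type u) [CommRing R] [Algebra k R] [Algebra.Smooth k R]
    (hdim : ringKrullDim R = 3)
    (P Q : Type*)
    [AddCommGroup P] [Module R P] [Module.Finite R P] [Module.Projective R P]
    [AddCommGroup Q] [Module R Q] [Module.Finite R Q] [Module.Projective R Q]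
    (hP : HasConstantRank R P 3) (hQ : HasConstantRank R Q 3)
    (hstab : ∃ n : ℕ, Nonempty ((P × (Fin n → R)) ≃ₗ[R] (Q × (Fin n → R)))) :
    Nonempty (P ≃ₗ[R] Q) := by
  obtain ⟨n, ⟨e⟩⟩ := hstab
  exact stably_isomorphic_rank_three_implies_isomorphic_general k hdim.le le_rfl hP e
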